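/- arXiv:2412.20809 — 3 statements merged into one kernel-verified Lean document; each statement's English description precedes it below -/
import Mathlib

section
/- Let k be an algebraically closed field of characteristic 0 and λ any partition of N. Then the Zariski closure in Mat_N(k) of the set {x + y : x, y ∈ O_λ} equals the Zariski closure of the set {a·x − x·a : a ∈ Mat_N(k), x ∈ O_λ}; that is, the conical secant variety of the nilpotent orbit O_λ ⊂ sl_N coincides with the closure of the union of its embedded tangent spaces, equivalently with the closure of the image of the moment map of the cotangent bundle of the orbit. -/
open Matrix

noncomputable section

/-- The Zariski closure of a set of `N × N` matrices. -/
def zClosure {k : Type*} [CommRing k] {N : ℕ}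
    (S : Set (Matrix (Fin N) (Fin N) k)) : Set (Matrix (Fin N) (Fin N) k) :=
  {M | ∀ P : MvPolynomial (Fin N × Fin N) k,
      (∀ x ∈ S, MvPolynomial.eval (fun q => x q.1 q.2) P = 0) →
      MvPolynomial.eval (fun q => M q.1 q.2) P = 0}

/-- The set of nilpotent matrices of Jordan type `lam`. -/
def jordanOrbit (k : Type*) [Field k] (N : ℕ) {p : ℕ} (lam : Fin p → ℕ) :
    Set (Matrix (Fin N) (Fin N) k) :=
  {M | ∀ i : ℕ, 1 ≤ i → (M ^ i).rank = ∑ l, (lam l - i)}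

/-! ### Polynomial curves -/

section PolynomialCurves

open Polynomial

variable {k : Type*} [Field k] {m n o : Type*}

/-- A scalar function given by a polynomial. -/
def IsPolyFun (f : k → k) : Prop := ∃ p : k[X], ∀ t, f t = p.eval t

/-- A matrix-valued function whose entries are given by polynomials. -/
def IsPolyMap (F : k → Matrix m n k) : Prop := ∃ G : Matrix m n k[X], ∀ t, F t = G.map (eval t)

lemma IsPolyFun.mul {f g : k → k} (hf : IsPolyFun f) (hg : IsPolyFun g) :
    IsPolyFun fun t => f t * g t := by
  obtain ⟨p, hp⟩ := hf
  obtain ⟨q, hq⟩ := hg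
  exact ⟨p * q, fun t => by simp [hp, hq]⟩

lemma IsPolyFun.prod {ι : Type*} (s : Finset ι) {f : ι → k → k} (hf : ∀ i, IsPolyFun (f i)) :
    IsPolyFun fun t => ∏ i ∈ s, f i t := by
  choose p hp using hf
  exact ⟨∏ i ∈ s, p i, fun t => by simp [hp, eval_prod]⟩

lemma IsPolyFun.exists_ne_zero [Infinite k] {f g : k → k} (hf : IsPolyFun f) (hg : IsPolyFun g)
    {s t : k} (hs : f s ≠ 0) (ht : g t ≠ 0) : ∃ u, f u ≠ 0 ∧ g u ≠ 0 := by
  obtain ⟨p, hp⟩ := hf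
  obtain ⟨q, hq⟩ := hg
  have hpq : p * q ≠ 0 := by
    refine mul_ne_zero ?_ ?_
    · rintro rfl; simp [hp] at hs
    · rintro rfl; simp [hq] at ht
  by_contra! h
  refine hpq (Polynomial.funext fun u => ?_)
  by_cases hu : f u = 0
  · simp [← hp, hu]
  · simp [← hq, h u hu]

lemma IsPolyMap.const (A : Matrix m n k) : IsPolyMap fun _ : k => A :=
  ⟨A.map C, fun t => by ext; simp⟩

lemma IsPolyMap.line (A B : Matrix m n k) : IsPolyMap fun t : k => (1 - t) • A + t • B :=
  ⟨(1 - X : k[X]) • A.map C + (X : k[X]) • B.map C, fun t => by ext; simp; ring⟩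

lemma IsPolyMap.add {F G : k → Matrix m n k} (hF : IsPolyMap F) (hG : IsPolyMap G) :
    IsPolyMap fun t => F t + G t := by
  obtain ⟨p, hp⟩ := hF
  obtain ⟨q, hq⟩ := hG
  exact ⟨p + q, fun t => by ext; simp [hp, hq]⟩

lemma IsPolyMap.sub {F G : k → Matrix m n k} (hF : IsPolyMap F) (hG : IsPolyMap G) :
    IsPolyMap fun t => F t - G t := by
  obtain ⟨p, hp⟩ := hF
  obtain ⟨q, hq⟩ := hG
  exact ⟨p - q, fun t => by ext; simp [hp, hq]⟩

lemma IsPolyMap.mul [Fintype n] {F : k → Matrix m n k} {G : k → Matrix n o k}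
    (hF : IsPolyMap F) (hG : IsPolyMap G) : IsPolyMap fun t => F t * G t := by
  obtain ⟨p, hp⟩ := hF
  obtain ⟨q, hq⟩ := hG
  exact ⟨p * q, fun t => by ext; simp [hp, hq, Matrix.mul_apply, eval_finsetSum]⟩

lemma IsPolyMap.submatrix {m' n' : Type*} {F : k → Matrix m n k} (hF : IsPolyMap F)
    (r : m' → m) (c : n' → n) : IsPolyMap fun t => (F t).submatrix r c := by
  obtain ⟨p, hp⟩ := hF
  exact ⟨p.submatrix r c, fun t => by ext; simp [hp]⟩

variable [Fintype m] [DecidableEq m]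

lemma IsPolyMap.pow {F : k → Matrix m m k} (hF : IsPolyMap F) (i : ℕ) :
    IsPolyMap fun t => F t ^ i := by
  induction i with
  | zero => simpa using IsPolyMap.const (1 : Matrix m m k)
  | succ i ih => simpa only [pow_succ] using ih.mul hF

lemma IsPolyMap.det {F : k → Matrix m m k} (hF : IsPolyMap F) : IsPolyFun fun t => (F t).det := by
  obtain ⟨p, hp⟩ := hF
  refine ⟨p.det, fun t => ?_⟩
  simp only [hp]
  exact ((evalRingHom t).map_det p).symm

lemma IsPolyMap.adjugate {F : k → Matrix m m k} (hF : IsPolyMap F) :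
    IsPolyMap fun t => (F t).adjugate := by
  obtain ⟨p, hp⟩ := hF
  refine ⟨p.adjugate, fun t => ?_⟩
  simp only [hp]
  exact ((evalRingHom t).map_adjugate p).symm

end PolynomialCurves

/-! ### Zariski closures -/

section Closure

variable {k : Type*} [Field k] {N : ℕ} {S S' : Set (Matrix (Fin N) (Fin N) k)}

lemma subset_zClosure : S ⊆ zClosure S := fun M hM _ hP => hP M hM

lemma zClosure_subset_zClosure (h : S ⊆ zClosure S') : zClosure S ⊆ zClosure S' :=
  fun _ hM P hP => hM P fun _ hx => h hx P hP

/-- A polynomial curve that generically lies in a Zariski closure lies in it everywhere. -/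
lemma IsPolyMap.mem_zClosure [Infinite k] {F : k → Matrix (Fin N) (Fin N) k} (hF : IsPolyMap F)
    {f : k → k} (hf : IsPolyFun f) {t₁ : k} (ht₁ : f t₁ ≠ 0)
    (h : ∀ t, f t ≠ 0 → F t ∈ zClosure S) (t₀ : k) : F t₀ ∈ zClosure S := by
  intro P hP
  by_contra hne
  obtain ⟨G, hG⟩ := hF
  have hPF : IsPolyFun fun t => MvPolynomial.eval (fun q => F t q.1 q.2) P := by
    refine ⟨MvPolynomial.eval₂ Polynomial.C (fun q => G q.1 q.2) P, fun t => ?_⟩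
    rw [MvPolynomial.polynomial_eval_eval₂]
    have : (Polynomial.evalRingHom t).comp Polynomial.C = RingHom.id k := by ext; simp
    rw [this, MvPolynomial.eval₂_id]
    simp only [hG, map_apply]
  obtain ⟨u, hu, hu'⟩ := hf.exists_ne_zero hPF ht₁ hne
  exact hu' (h u hu P hP)

end Closure

/-! ### Basic symmetries of nilpotent orbits -/

section Orbit

variable {k : Type*} [Field k] {N p : ℕ} {lam : Fin p → ℕ}

lemma mul_mul_pow_of_mul_eq_one {m n : Type*} [Fintype m] [Fintype n] [DecidableEq m] [DecidableEq n]
    {L : Matrix m n k} {R : Matrix n m k} (h : R * L = 1) (x : Matrix n n k) {i : ℕ}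
    (hi : 1 ≤ i) : (L * x * R) ^ i = L * x ^ i * R := by
  induction i, hi using Nat.le_induction with
  | base => simp
  | succ i _ ih =>
    rw [pow_succ, ih, pow_succ]
    calc L * x ^ i * R * (L * x * R) = L * x ^ i * (R * L) * x * R := by
          simp only [Matrix.mul_assoc]
      _ = _ := by rw [h, Matrix.mul_one]; simp only [Matrix.mul_assoc]

lemma conj_mem_jordanOrbit {x g g' : Matrix (Fin N) (Fin N) k} (hx : x ∈ jordanOrbit k N lam)
    (h : g * g' = 1) : g * x * g' ∈ jordanOrbit k N lam := by
  intro i hi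
  have h' : g' * g = 1 := mul_eq_one_comm.mp h
  rw [mul_mul_pow_of_mul_eq_one h' x hi, rank_mul_eq_left_of_isUnit_det,
    rank_mul_eq_right_of_isUnit_det, hx i hi]
  · exact (Matrix.isUnit_iff_isUnit_det _).mp (.of_mul_eq_one _ h)
  · exact (Matrix.isUnit_iff_isUnit_det _).mp (.of_mul_eq_one _ h')

lemma smul_mem_jordanOrbit {x : Matrix (Fin N) (Fin N) k} (hx : x ∈ jordanOrbit k N lam)
    {c : k} (hc : c ≠ 0) : c • x ∈ jordanOrbit k N lam := by
  intro i hi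
  rw [smul_pow, rank_smul_of_mem_nonZeroDivisors _
    (mem_nonZeroDivisors_of_ne_zero (pow_ne_zero i hc)), hx i hi]

lemma adjugate_eq_det_smul_inv {g : Matrix (Fin N) (Fin N) k} (h : g.det ≠ 0) :
    g.adjugate = g.det • g⁻¹ := by
  rw [Matrix.inv_def, smul_smul, Ring.mul_inverse_cancel _ (IsUnit.mk0 _ h), one_smul]

lemma conj_adjugate_mem_jordanOrbit {x g : Matrix (Fin N) (Fin N) k}
    (hx : x ∈ jordanOrbit k N lam) (h : g.det ≠ 0) :
    g * x * g.adjugate ∈ jordanOrbit k N lam := by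
  have h1 : g * g⁻¹ = 1 := Matrix.mul_nonsing_inv g (IsUnit.mk0 _ h)
  rw [adjugate_eq_det_smul_inv h, Matrix.mul_smul]
  exact smul_mem_jordanOrbit (conj_mem_jordanOrbit hx h1) h

variable (k N lam) in
/-- The union of the embedded tangent spaces to the orbit. -/
abbrev tangentUnion : Set (Matrix (Fin N) (Fin N) k) :=
  {M | ∃ a : Matrix (Fin N) (Fin N) k, ∃ x ∈ jordanOrbit k N lam, M = a * x - x * a}

lemma tangentUnion_subset_zClosure_secant [Infinite k] :
    tangentUnion k N lam ⊆
      zClosure (Set.image2 (· + ·) (jordanOrbit k N lam) (jordanOrbit k N lam)) := by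
  rintro _ ⟨a, x, hx, rfl⟩
  have hline := IsPolyMap.line (1 : Matrix (Fin N) (Fin N) k) (1 + a)
  have hF := (IsPolyMap.const (a * x - x * a)).mul hline.adjugate
  have hid : IsPolyFun fun t : k => t := ⟨Polynomial.X, by simp⟩
  obtain ⟨u, hu, hu'⟩ := hid.exists_ne_zero hline.det (s := 1) (t := 0) (by simp) (by simp)
  have key := hF.mem_zClosure
    (S := Set.image2 (· + ·) (jordanOrbit k N lam) (jordanOrbit k N lam))
    (hid.mul hline.det) (mul_ne_zero hu hu') ?_ 0
  · simpa using key
  intro t ht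
  have ht0 : t ≠ 0 := left_ne_zero_of_mul ht
  have hdet := right_ne_zero_of_mul ht
  set g := (1 - t) • (1 : Matrix (Fin N) (Fin N) k) + t • (1 + a) with hg
  refine subset_zClosure ⟨t⁻¹ • (g * x * g.adjugate),
    smul_mem_jordanOrbit (conj_adjugate_mem_jordanOrbit hx hdet) (inv_ne_zero ht0),
    (-(t⁻¹ * g.det)) • x,
    smul_mem_jordanOrbit hx (neg_ne_zero.mpr (mul_ne_zero (inv_ne_zero ht0) hdet)), ?_⟩
  have hcomm : g * x - x * g = t • (a * x - x * a) := by
    have : g = 1 + t • a := by rw [hg]; module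
    rw [this, add_mul, mul_add, Matrix.smul_mul, Matrix.mul_smul, one_mul, mul_one, smul_sub]
    abel
  have hx' : g.det • x = x * g * g.adjugate := by
    rw [Matrix.mul_assoc, Matrix.mul_adjugate, Matrix.mul_smul, Matrix.mul_one]
  have : a * x - x * a = t⁻¹ • (g * x - x * g) := by
    rw [hcomm, smul_smul, inv_mul_cancel₀ ht0, one_smul]
  simp only [this, neg_smul, mul_smul, hx', Matrix.smul_mul, sub_mul, smul_sub]
  abel

end Orbit

/-! ### The shift matrix as a degeneration of a nilpotent orbit -/

section Shift

variable {k : Type*} [Field k]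

variable (k) in
/-- The matrix sending `e_j` to `e_{j - q}` for `q ≤ j ≤ 2 * q`, and all other basis vectors
to zero. -/
def shiftMatrix (q N : ℕ) : Matrix (Fin N) (Fin N) k :=
  Matrix.of fun i j => if (j : ℕ) = i + q ∧ (i : ℕ) ≤ q then 1 else 0

/-- Given a convex sequence `r` decreasing to `0`, a map carrying the interval
`[r (n + 1), r n)` into `[r n, r (n - 1))`. -/
lemma exists_block_shift {r : ℕ → ℕ} (hr : Antitone r)
    (hconv : ∀ n, 2 * r (n + 1) ≤ r n + r (n + 2)) {B : ℕ} (hB : r B = 0) :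
    ∃ ψ : ℕ → ℕ, (∀ n m, m < r 1 → (ψ m < r n ↔ m < r (n + 1))) ∧
      ∀ m m', m < r 1 → m' < r 1 → ψ m = ψ m' → m = m' := by
  classical
  let d : ℕ → ℕ := fun m => Nat.findGreatest (fun i => m < r i) B
  have hd : ∀ m, m < r 1 → m < r (d m) ∧ r (d m + 1) ≤ m ∧ 1 ≤ d m := by
    intro m hm
    have hB1 : 1 ≤ B := by
      by_contra h
      have := hr (show B ≤ 1 by omega)
      omega
    refine ⟨Nat.findGreatest_spec (P := fun i => m < r i) hB1 hm, ?_, Nat.le_findGreatest hB1 hm⟩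
    by_contra! h
    by_cases h' : d m + 1 ≤ B
    · exact absurd (Nat.le_findGreatest (P := fun i => m < r i) h' h) (by simp [d])
    · have := hr (show B ≤ d m + 1 by omega)
      omega
  let ψ : ℕ → ℕ := fun m => m + r (d m) - r (d m + 1)
  have hiff : ∀ n m, m < r 1 → (ψ m < r n ↔ m < r (n + 1)) := by
    intro n m hm
    obtain ⟨h1, h2, h3⟩ := hd m hm
    have hψ : ψ m = m + r (d m) - r (d m + 1) := rfl
    rcases Nat.lt_or_ge n (d m) with hn | hn
    · have h4 := hr (show n + 1 ≤ d m from hn)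
      have h5 := hr (show n ≤ d m - 1 by omega)
      have h6 := hconv (d m - 1)
      rw [show d m - 1 + 1 = d m by omega, show d m - 1 + 2 = d m + 1 by omega] at h6
      omega
    · have h4 := hr (show d m + 1 ≤ n + 1 by omega)
      have h5 := hr hn
      omega
  have hmono : ∀ m m', m < m' → m' < r 1 → ψ m < ψ m' := by
    intro m m' hlt hm'
    obtain ⟨h1, h2, h3⟩ := hd m (hlt.trans hm')
    obtain ⟨h1', h2', h3'⟩ := hd m' hm'
    rcases Nat.lt_or_ge (d m') (d m) with h | h
    · have := (hiff (d m') m (hlt.trans hm')).mpr (h1.trans_le (hr h))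
      have := (hiff (d m') m' hm').not.mpr (by omega)
      omega
    · have : d m = d m' := by
        refine le_antisymm h ?_
        by_contra! hlt'
        have := hr (show d m + 1 ≤ d m' from hlt')
        omega
      simp only [ψ, this] at *
      omega
  refine ⟨ψ, hiff, fun m m' hm hm' h => ?_⟩
  rcases lt_trichotomy m m' with h1 | h1 | h1
  · exact absurd h (hmono _ _ h1 hm').ne
  · exact h1
  · exact absurd h (hmono _ _ h1 hm).ne'

/-- If `G` is strictly compatible with the coordinate flag of dimensions `r n`, then `G ^ n` has
rank at most `r n`. -/
lemma rank_pow_le_of_flag {N : ℕ} {r : ℕ → ℕ} {G : Matrix (Fin N) (Fin N) k} (h0 : r 0 = N)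
    (hG : ∀ n (i j : Fin N), (j : ℕ) < r n → r (n + 1) ≤ i → G i j = 0) (n : ℕ) :
    (G ^ n).rank ≤ r n := by
  have hpow : ∀ n (i j : Fin N), r n ≤ i → (G ^ n) i j = 0 := by
    intro n
    induction n with
    | zero => intro i j hi; omega
    | succ n ih =>
      intro i j hi
      rw [pow_succ', Matrix.mul_apply]
      refine Finset.sum_eq_zero fun l _ => ?_
      rcases Nat.lt_or_ge l (r n) with hl | hl
      · rw [hG n i l hl hi, zero_mul]
      · rw [ih l j hl, mul_zero]
  refine (Matrix.rank_le_card_of_support_subset _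
    (Finset.univ.filter fun i : Fin N => (i : ℕ) < r n) ?_).trans ?_
  · intro i hi
    by_contra hlt
    refine hi (funext fun j => hpow n i j ?_)
    simpa using hlt
  · calc _ ≤ (Finset.range (r n)).card :=
          Finset.card_le_card_of_injOn (fun i : Fin N => (i : ℕ)) (by intro i; simp)
            (Fin.val_injective.injOn)
      _ = r n := Finset.card_range _

variable [Infinite k] {N p : ℕ} {lam : Fin p → ℕ}

/-- Commutators with conjugates of the shift matrix lie in the closure of the union of tangent
spaces, as soon as the shift matrix is compatible with a flag of dimensions
`rank x, rank x ^ 2, …`. -/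
lemma commutator_shiftMatrix_mem_zClosure (hsum : ∑ l, lam l = N) {q : ℕ}
    (hq : q < ∑ l, (lam l - 1))
    (hq' : ∀ n, 1 ≤ n → q < ∑ l, (lam l - n) → ∑ l, (lam l - n) ≤ ∑ l, (lam l - (n + 1)) + q)
    {Q Q' : Matrix (Fin N) (Fin N) k} (hQ : Q * Q' = 1) (a : Matrix (Fin N) (Fin N) k) :
    a * (Q * shiftMatrix k q N * Q') - (Q * shiftMatrix k q N * Q') * a ∈
      zClosure (tangentUnion k N lam) := by
  classical
  set r : ℕ → ℕ := fun n => ∑ l, (lam l - n) with hr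
  have h0 : r 0 = N := by simpa [hr] using hsum
  have hanti : Antitone r := fun i j hij => Finset.sum_le_sum fun l _ => by omega
  have hconv : ∀ n, 2 * r (n + 1) ≤ r n + r (n + 2) := by
    intro n
    simp only [hr, Finset.mul_sum, ← Finset.sum_add_distrib]
    exact Finset.sum_le_sum fun l _ => by omega
  have hN : r N = 0 := by
    refine Finset.sum_eq_zero fun l _ => ?_
    have := Finset.single_le_sum (f := lam) (fun i _ => Nat.zero_le _) (Finset.mem_univ l)
    omega
  obtain ⟨ψ, hψ, hinj⟩ := exists_block_shift hanti hconv hN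
  let x : Matrix (Fin N) (Fin N) k :=
    Matrix.of fun i j => if (i : ℕ) < r 1 ∧ (j : ℕ) = ψ i then 1 else 0
  have hxflag : ∀ n (i j : Fin N), (j : ℕ) < r n → r (n + 1) ≤ i → x i j = 0 := by
    intro n i j hj hi
    refine if_neg ?_
    rintro ⟨h1, h2⟩
    have := (hψ n i h1).mp (h2 ▸ hj)
    omega
  have hsflag : ∀ n (i j : Fin N), (j : ℕ) < r n → r (n + 1) ≤ i → shiftMatrix k q N i j = 0 := by
    intro n i j hj hi
    refine if_neg ?_
    rintro ⟨h1, h2⟩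
    rcases Nat.eq_zero_or_pos n with rfl | hn
    · change r 1 ≤ i at hi
      change q < r 1 at hq
      omega
    · have h3 : r n ≤ r (n + 1) + q := hq' n hn (by change q < r n; omega)
      omega
  have hlt : ∀ n m, m < r n → ψ^[n] m < N := by
    intro n
    induction n with
    | zero => intro m hm; simpa [h0] using hm
    | succ n ih =>
      intro m hm
      rw [Function.iterate_succ_apply]
      exact ih _ ((hψ n m (hm.trans_le (hanti (by omega)))).mpr hm)
  have hinj' : ∀ n m m', m < r n → m' < r n → ψ^[n] m = ψ^[n] m' → m = m' := by
    intro n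
    induction n with
    | zero => intro m m' _ _ h; simpa using h
    | succ n ih =>
      intro m m' hm hm' h
      rw [Function.iterate_succ_apply, Function.iterate_succ_apply] at h
      have h1 := hm.trans_le (hanti (show 1 ≤ n + 1 by omega))
      have h1' := hm'.trans_le (hanti (show 1 ≤ n + 1 by omega))
      exact hinj m m' h1 h1' (ih _ _ ((hψ n m h1).mpr hm) ((hψ n m' h1').mpr hm') h)
  have hle : ∀ n, r n ≤ N := fun n => (hanti (Nat.zero_le n)).trans h0.le
  have hxpow : ∀ n (i j : Fin N), (i : ℕ) < r n →
      (x ^ n) i j = if (j : ℕ) = ψ^[n] i then 1 else 0 := by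
    intro n
    induction n with
    | zero =>
      intro i j _
      simp [Matrix.one_apply, Fin.ext_iff, eq_comm]
    | succ n ih =>
      intro i j hi
      have h1 := hi.trans_le (hanti (show 1 ≤ n + 1 by omega))
      have h2 := (hψ n i h1).mpr hi
      rw [pow_succ', Matrix.mul_apply, Finset.sum_eq_single ⟨ψ i, h2.trans_le (hle n)⟩]
      · rw [ih _ _ h2, Function.iterate_succ_apply]
        simp [x, h1]
      · intro l _ hl
        have : (l : ℕ) ≠ ψ i := fun h => hl (Fin.ext h)
        simp [x, this]
      · simp
  let row : ∀ n, Fin (r n) → Fin N := fun n => Fin.castLE (hle n)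
  let col : ∀ n, Fin (r n) → Fin N := fun n i => ⟨ψ^[n] i, hlt n i i.2⟩
  have hone : ∀ n, (x ^ n).submatrix (row n) (col n) = 1 := by
    intro n
    ext i j
    rw [submatrix_apply, hxpow n _ _ (by simp [row]), Matrix.one_apply]
    refine if_congr ⟨fun h => ?_, fun h => by simp [row, col, h]⟩ rfl rfl
    exact Fin.ext (hinj' n _ _ i.2 j.2 (by simpa [row, col] using h.symm))
  have hline := IsPolyMap.line (shiftMatrix k q N) x
  have hz := ((IsPolyMap.const Q).mul hline).mul (IsPolyMap.const Q')
  have hF := ((IsPolyMap.const a).mul hz).sub (hz.mul (IsPolyMap.const a))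
  have hf := IsPolyFun.prod (Finset.range N)
    fun n => ((hline.pow n).submatrix (row n) (col n)).det
  have key := hF.mem_zClosure (S := tangentUnion k N lam) hf (t₁ := 1)
    (by simp [hone]) ?_ 0
  · simpa using key
  intro t ht
  set G := (1 - t) • shiftMatrix k q N + t • x with hG
  refine subset_zClosure ⟨a, Q * G * Q', conj_mem_jordanOrbit (fun n _ => ?_) hQ, rfl⟩
  have hup := rank_pow_le_of_flag (G := G) h0 (fun n i j hj hi => by
    simp [hG, hxflag n i j hj hi, hsflag n i j hj hi]) n
  refine le_antisymm hup ?_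
  rcases Nat.lt_or_ge n N with hn | hn
  · have hdet := Finset.prod_ne_zero_iff.mp ht n (Finset.mem_range.mpr hn)
    calc ∑ l, (lam l - n) = ((G ^ n).submatrix (row n) (col n)).rank := by
          rw [rank_of_det_ne_zero hdet, Fintype.card_fin]
      _ ≤ _ := rank_submatrix_le _ _ _
  · have : r n ≤ 0 := (hanti hn).trans hN.le
    exact this.trans (Nat.zero_le _)

end Shift

/-! ### Cyclic traceless matrices as commutators with a shift -/

section Cyclic

variable {k : Type*} [Field k] {s : ℕ}

/-- The matrix with columns `w, K w, K² w, …`. -/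
def krylovMatrix (K : Matrix (Fin s) (Fin s) k) (w : Fin s → k) : Matrix (Fin s) (Fin s) k :=
  Matrix.of fun i j => (K ^ (j : ℕ) *ᵥ w) i

lemma sum_charpoly_coeff_smul_krylov (K : Matrix (Fin s) (Fin s) k) (w : Fin s → k) :
    ∑ m ∈ Finset.range (s + 1), K.charpoly.coeff m • (K ^ m *ᵥ w) = 0 := by
  have h := K.aeval_self_charpoly
  rw [Polynomial.aeval_eq_sum_range, charpoly_natDegree_eq_dim, Fintype.card_fin] at h
  simpa [Matrix.sum_mulVec, Matrix.smul_mulVec] using congrArg (· *ᵥ w) h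

/-- A basis obtained from a cyclic vector of a traceless matrix by a Horner scheme for the
characteristic polynomial. -/
lemma exists_horner_basis {K : Matrix (Fin s) (Fin s) k} {w : Fin s → k}
    (hdet : (krylovMatrix K w).det ≠ 0) (htr : K.trace = 0) {q : ℕ} (hq : q + 1 < s) :
    ∃ b : ℕ → Fin s → k, (∀ j, s ≤ j → b j = 0) ∧ (∀ j < q, K *ᵥ b j = b (j + 1)) ∧
      K *ᵥ b q = - b (q + 1) ∧
      (∀ j, q < j → j < s →
        ∃ c : ℕ → k, K *ᵥ b j + b (j + 1) = ∑ m ∈ Finset.range (q + 1), c m • b m) ∧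
      (Matrix.of fun i j : Fin s => b j i).det ≠ 0 := by
  classical
  let e : ℕ → Fin s → k := fun j => K ^ j *ᵥ w
  let χ : ℕ → k := fun m => K.charpoly.coeff m
  have hKe : ∀ j, K *ᵥ e j = e (j + 1) := fun j => by simp [e, pow_succ']
  have hχs : χ s = 1 := by
    have := K.charpoly_monic.coeff_natDegree
    rwa [charpoly_natDegree_eq_dim, Fintype.card_fin] at this
  have hχs' : χ (s - 1) = 0 := by
    have : Nonempty (Fin s) := ⟨⟨0, by omega⟩⟩
    have h := K.trace_eq_neg_charpoly_coeff
    rw [htr, Fintype.card_fin] at h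
    simpa [χ] using h.symm
  let S : ℕ → Fin s → k := fun i => ∑ l ∈ Finset.range (i + 1), χ (s - l) • e (q + i - l)
  have hS0 : S 0 = e q := by simp [S, hχs]
  have hKS : ∀ i, K *ᵥ S i = ∑ l ∈ Finset.range (i + 1), χ (s - l) • e (q + i + 1 - l) := by
    intro i
    simp only [S, Matrix.mulVec_sum, Matrix.mulVec_smul, hKe]
    refine Finset.sum_congr rfl fun l hl => ?_
    rw [show q + i + 1 - l = q + i - l + 1 by have := Finset.mem_range.mp hl; omega]
  have hSsucc : ∀ i, S (i + 1) = K *ᵥ S i + χ (s - (i + 1)) • e q := by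
    intro i
    rw [hKS]
    simp only [S]
    rw [Finset.sum_range_succ _ (i + 1), show q + (i + 1) - (i + 1) = q by omega]
    rfl
  let b : ℕ → Fin s → k := fun j =>
    if j < q then e j else if j < s then (-1 : k) ^ (j - q) • S (j - q) else 0
  have hb_lt : ∀ j ≤ q, b j = e j := by
    intro j hj
    rcases hj.lt_or_eq with h | rfl
    · simp [b, h]
    · simp [b, hS0, show j < s by omega]
  have hb_ge : ∀ i, q + i < s → b (q + i) = (-1 : k) ^ i • S i := by
    intro i hi
    simp [b, hi]
  have hb_out : ∀ j, s ≤ j → b j = 0 := by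
    intro j hj
    simp [b, show ¬ j < q by omega, show ¬ j < s by omega]
  have hrec : ∀ i, q + i + 1 < s →
      K *ᵥ b (q + i) + b (q + i + 1) = ((-1 : k) ^ (i + 1) * χ (s - (i + 1))) • b q := by
    intro i hi
    rw [hb_ge i (by omega), show q + i + 1 = q + (i + 1) by ring, hb_ge (i + 1) (by omega),
      hSsucc, hb_lt q le_rfl, Matrix.mulVec_smul, pow_succ]
    module
  refine ⟨b, hb_out, ?_, ?_, ?_, ?_⟩
  · intro j hj
    rw [hb_lt j hj.le, hb_lt (j + 1) hj, hKe]
  · have := hrec 0 (by omega)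
    simp only [add_zero, zero_add, hχs', mul_zero, zero_smul] at this
    exact eq_neg_of_add_eq_zero_left this
  · intro j hj hjs
    obtain ⟨i, rfl⟩ := Nat.exists_eq_add_of_le hj.le
    rcases (show q + i + 1 ≤ s by omega).lt_or_eq with h | h
    · refine ⟨Pi.single q ((-1 : k) ^ (i + 1) * χ (s - (i + 1))), ?_⟩
      rw [hrec i h, Finset.sum_eq_single q]
      · simp
      · intro m _ hm
        simp [hm]
      · simp
    · refine ⟨fun m => - ((-1 : k) ^ i * χ m), ?_⟩
      have hch : ∑ m ∈ Finset.range (q + 1 + (i + 1)), χ m • e m = 0 := by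
        rw [show q + 1 + (i + 1) = s + 1 by omega]
        exact sum_charpoly_coeff_smul_krylov K w
      rw [Finset.sum_range_add, ← Finset.sum_range_reflect (fun x => χ (q + 1 + x) • e (q + 1 + x))]
        at hch
      have hKSi : K *ᵥ S i =
          ∑ l ∈ Finset.range (i + 1), χ (q + 1 + (i + 1 - 1 - l)) • e (q + 1 + (i + 1 - 1 - l)) := by
        rw [hKS]
        refine Finset.sum_congr rfl fun l hl => ?_
        have := Finset.mem_range.mp hl
        rw [show q + 1 + (i + 1 - 1 - l) = s - l by omega, show q + i + 1 - l = s - l by omega]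
      rw [← hKSi] at hch
      rw [hb_out (q + i + 1) h.ge, hb_ge i hjs, Matrix.mulVec_smul,
        eq_neg_of_add_eq_zero_right hch, add_zero, smul_neg, Finset.smul_sum,
        ← Finset.sum_neg_distrib]
      refine Finset.sum_congr rfl fun m hm => ?_
      rw [hb_lt m (by have := Finset.mem_range.mp hm; omega), smul_smul, neg_smul]
  · intro h
    obtain ⟨y, hy0, hy⟩ := Matrix.exists_vecMul_eq_zero_iff.mpr h
    refine hdet (Matrix.exists_vecMul_eq_zero_iff.mp ⟨y, hy0, ?_⟩)
    have hyb : ∀ j < s, y ⬝ᵥ b j = 0 := fun j hj => congrFun hy ⟨j, hj⟩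
    have hye : ∀ j < s, y ⬝ᵥ e j = 0 := by
      intro j
      induction j using Nat.strong_induction_on with
      | _ j ih =>
        intro hj
        rcases Nat.le_total j q with hjq | hjq
        · rw [← hb_lt j hjq, hyb j hj]
        · obtain ⟨i, rfl⟩ := Nat.exists_eq_add_of_le hjq
          have h1 := hyb _ hj
          rw [hb_ge i hj, dotProduct_smul, smul_eq_zero, or_iff_right (by simp)] at h1
          simp only [S, dotProduct_sum, dotProduct_smul] at h1
          rw [Finset.sum_range_succ'] at h1
          simp only [Nat.sub_zero, hχs, one_smul] at h1
          rw [Finset.sum_eq_zero, zero_add] at h1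
          · exact h1
          · intro l hl
            have := Finset.mem_range.mp hl
            rw [ih (q + i - (l + 1)) (by omega) (by omega), smul_zero]
    exact funext fun j => hye j j.2

/-- A traceless matrix of size `2 * q + 1` or `2 * q + 2` with a cyclic vector is a commutator with
a conjugate of the shift matrix. -/
lemma exists_commutator_shiftMatrix {K : Matrix (Fin s) (Fin s) k} {w : Fin s → k}
    (hdet : (krylovMatrix K w).det ≠ 0) (htr : K.trace = 0) {q : ℕ} (hq : 1 ≤ q)
    (hs : s = 2 * q + 1 ∨ s = 2 * q + 2) :
    ∃ a P P' : Matrix (Fin s) (Fin s) k, P * P' = 1 ∧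
      K = a * (P * shiftMatrix k q s * P') - (P * shiftMatrix k q s * P') * a := by
  classical
  obtain ⟨b, hout, hlt, heq, hgt, hb⟩ := exists_horner_basis hdet htr (q := q) (by omega)
  set P : Matrix (Fin s) (Fin s) k := Matrix.of fun i j => b j i with hP
  have hPP' : P * P⁻¹ = 1 := Matrix.mul_nonsing_inv P (IsUnit.mk0 _ hb)
  have hP'P : P⁻¹ * P = 1 := mul_eq_one_comm.mp hPP'
  have hcol : ∀ (A : Matrix (Fin s) (Fin s) k) (j : ℕ) (hj : j < s),
      (A * P⁻¹) *ᵥ b j = A.col ⟨j, hj⟩ := by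
    intro A j hj
    have : b j = P *ᵥ Pi.single ⟨j, hj⟩ 1 := by rw [mulVec_single_one]; rfl
    rw [this, mulVec_mulVec, Matrix.mul_assoc, hP'P, Matrix.mul_one, mulVec_single_one]
  set z := P * shiftMatrix k q s * P⁻¹ with hz
  have hzb : ∀ j, z *ᵥ b j = if q ≤ j ∧ j ≤ 2 * q then b (j - q) else 0 := by
    intro j
    rcases Nat.lt_or_ge j s with hj | hj
    · rw [hz, hcol _ j hj]
      ext i
      simp only [col_apply, Matrix.mul_apply, shiftMatrix, of_apply, hP]
      split_ifs with h
      · rw [Finset.sum_eq_single ⟨j - q, by omega⟩]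
        · rw [if_pos (by constructor <;> simp only <;> omega), mul_one]
        · intro l _ hl
          rw [if_neg, mul_zero]
          rintro ⟨h1, h2⟩
          exact hl (Fin.ext (by simp only; omega))
        · simp
      · refine Finset.sum_eq_zero fun l _ => ?_
        rw [if_neg, mul_zero]
        omega
    · rw [hout j hj, mulVec_zero, if_neg (by omega)]
  choose c hc using hgt
  have hu : ∀ j : Fin s, ∃ u : Fin s → k, q < (j : ℕ) → z *ᵥ u = - (K *ᵥ b j + b (j + 1)) := by
    intro j
    by_cases hj : q < (j : ℕ)
    · refine ⟨- ∑ m ∈ Finset.range (q + 1), c j hj j.2 m • b (m + q), fun _ => ?_⟩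
      rw [hc j hj j.2, mulVec_neg, mulVec_sum]
      refine congrArg _ (Finset.sum_congr rfl fun m hm => ?_)
      have := Finset.mem_range.mp hm
      rw [mulVec_smul, hzb, if_pos (by omega), Nat.add_sub_cancel]
    · exact ⟨0, fun h => absurd h hj⟩
  choose u hu using hu
  let A : Matrix (Fin s) (Fin s) k :=
    Matrix.of fun i j => if (j : ℕ) ≤ q then - b (j + q + 1) i else u j i
  have hab : ∀ j ≤ q, (A * P⁻¹) *ᵥ b j = - b (j + q + 1) := by
    intro j hj
    rw [hcol A j (by omega)]
    ext i
    simp [A, hj]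
  have hab' : ∀ j : Fin s, q < (j : ℕ) → (A * P⁻¹) *ᵥ b j = u j := by
    intro j hj
    rw [hcol A j j.2]
    ext i
    simp [A, show ¬ (j : ℕ) ≤ q by omega]
  refine ⟨A * P⁻¹, P, P⁻¹, hPP', ?_⟩
  have hcols : ∀ j : Fin s, K *ᵥ b j = ((A * P⁻¹) * z - z * (A * P⁻¹)) *ᵥ b j := by
    intro j
    rw [sub_mulVec, ← mulVec_mulVec (b j) (A * P⁻¹) z, ← mulVec_mulVec (b j) z (A * P⁻¹), hzb]
    rcases lt_trichotomy (j : ℕ) q with hj | hj | hj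
    · rw [if_neg (by omega), mulVec_zero, hab j hj.le, mulVec_neg, hzb, if_pos (by omega),
        hlt j hj, show (j : ℕ) + q + 1 - q = j + 1 by omega]
      simp
    · rw [if_pos (by omega), hab j hj.le, mulVec_neg, hzb, if_neg (by omega), hj,
        hab _ (by omega), heq]
      simp
    · rw [hab' j hj, hu j hj]
      split_ifs with h
      · rw [hab _ (by omega), show (j : ℕ) - q + q + 1 = j + 1 by omega]
        abel
      · rw [hout (j + 1) (by omega), mulVec_zero]
        abel
  have hKP : K * P = ((A * P⁻¹) * z - z * (A * P⁻¹)) * P := by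
    ext i j
    exact congrFun (hcols j) i
  calc K = K * P * P⁻¹ := by rw [Matrix.mul_assoc, hPP', Matrix.mul_one]
    _ = _ := by rw [hKP, Matrix.mul_assoc, hPP', Matrix.mul_one]

end Cyclic


/-! ### Traceless matrices of bounded rank -/

section BoundedRank

variable {k : Type*} [Field k]

/-- The property of being a commutator with a conjugate of the shift matrix. -/
def IsShiftCommutator (q : ℕ) {N : ℕ} (M : Matrix (Fin N) (Fin N) k) : Prop :=
  ∃ a Q Q' : Matrix (Fin N) (Fin N) k, Q * Q' = 1 ∧
    M = a * (Q * shiftMatrix k q N * Q') - (Q * shiftMatrix k q N * Q') * a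

lemma IsShiftCommutator.conj {q N : ℕ} {M g g' : Matrix (Fin N) (Fin N) k}
    (hM : IsShiftCommutator q M) (hg : g * g' = 1) : IsShiftCommutator q (g * M * g') := by
  obtain ⟨a, Q, Q', hQ, rfl⟩ := hM
  have hg' : g' * g = 1 := mul_eq_one_comm.mp hg
  refine ⟨g * a * g', g * Q, Q' * g', ?_, ?_⟩
  · calc g * Q * (Q' * g') = g * (Q * Q') * g' := by simp only [Matrix.mul_assoc]
      _ = 1 := by rw [hQ, Matrix.mul_one, hg]
  · have h : ∀ X : Matrix (Fin N) (Fin N) k, g' * (g * X) = X := fun X => by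
      rw [← Matrix.mul_assoc, hg', Matrix.one_mul]
    simp only [Matrix.mul_sub, Matrix.sub_mul, Matrix.mul_assoc, h]

variable {s c : ℕ}

/-- A square matrix of size `s + c` whose last `c` rows vanish. -/
def extendByZero (K : Matrix (Fin s) (Fin s) k) (L : Matrix (Fin s) (Fin c) k) :
    Matrix (Fin (s + c)) (Fin (s + c)) k :=
  (fromBlocks K L 0 0).submatrix finSumFinEquiv.symm finSumFinEquiv.symm

lemma shiftMatrix_add {q : ℕ} (h : 2 * q + 1 ≤ s) :
    shiftMatrix k q (s + c) = extendByZero (shiftMatrix k q s) 0 := by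
  ext i j
  refine Fin.addCases (fun i => ?_) (fun i => ?_) i <;>
    refine Fin.addCases (fun j => ?_) (fun j => ?_) j <;>
    simp [shiftMatrix, extendByZero] <;> omega

lemma IsShiftCommutator.extendByZero {q : ℕ} {K : Matrix (Fin s) (Fin s) k}
    (hK : IsShiftCommutator q K) (h : 2 * q + 1 ≤ s) :
    IsShiftCommutator q (extendByZero K (0 : Matrix (Fin s) (Fin c) k)) := by
  obtain ⟨a, Q, Q', hQ, hK⟩ := hK
  let e : Fin (s + c) ≃ Fin s ⊕ Fin c := finSumFinEquiv.symm
  refine ⟨(fromBlocks a 0 0 0).submatrix e e, (fromBlocks Q 0 0 1).submatrix e e,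
    (fromBlocks Q' 0 0 1).submatrix e e, ?_, ?_⟩
  · simp [fromBlocks_multiply, hQ]
  · rw [shiftMatrix_add h]
    simp only [_root_.extendByZero]
    change (fromBlocks K 0 0 0).submatrix e e = _ * (_ * (fromBlocks _ _ _ _).submatrix e e * _) -
      (_ * (fromBlocks _ _ _ _).submatrix e e * _) * _
    simp only [submatrix_mul_equiv, fromBlocks_multiply]
    ext i j
    rw [Matrix.sub_apply]
    simp only [submatrix_apply]
    rcases e i with i | i <;> rcases e j with j | j <;> simp [hK]

/-- If `K` is invertible, then `[K L; 0 0]` is conjugate to `[K 0; 0 0]`. -/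
lemma exists_extendByZero_conj {K : Matrix (Fin s) (Fin s) k} (hK : K.det ≠ 0)
    (L : Matrix (Fin s) (Fin c) k) :
    ∃ g g' : Matrix (Fin (s + c)) (Fin (s + c)) k, g * g' = 1 ∧
      extendByZero K L = g * extendByZero K 0 * g' := by
  have hK' : K * K⁻¹ = 1 := Matrix.mul_nonsing_inv K (IsUnit.mk0 _ hK)
  let e : Fin (s + c) ≃ Fin s ⊕ Fin c := finSumFinEquiv.symm
  refine ⟨(fromBlocks 1 (-(K⁻¹ * L)) 0 1).submatrix e e,
    (fromBlocks 1 (K⁻¹ * L) 0 1).submatrix e e, ?_, ?_⟩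
  · simp [fromBlocks_multiply]
  · simp only [extendByZero]
    change (fromBlocks K L 0 0).submatrix e e = _ * (fromBlocks _ _ _ _).submatrix e e * _
    simp [fromBlocks_multiply, ← Matrix.mul_assoc, hK']

lemma exists_conj_eq_extendByZero (M : Matrix (Fin (s + c)) (Fin (s + c)) k) (hM : M.rank ≤ s) :
    ∃ g g' : Matrix (Fin (s + c)) (Fin (s + c)) k, g * g' = 1 ∧
      ∃ K L, g * M * g' = extendByZero K L := by
  obtain ⟨V, U, e, hV, hU, h⟩ := exists_rank_normal_form M
  have hle : M.rank ≤ s + c := by omega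
  let σ : Fin (s + c) ≃ Fin (s + c) :=
    (e.trans finSumFinEquiv).trans (finCongr (by simp; omega))
  have hVV : V * V⁻¹ = 1 := Matrix.mul_nonsing_inv V ((isUnit_iff_isUnit_det V).mp hV)
  have hUU : U * U⁻¹ = 1 := Matrix.mul_nonsing_inv U ((isUnit_iff_isUnit_det U).mp hU)
  have hrow : ∀ i j : Fin (s + c), M.rank ≤ i → (V.submatrix σ.symm id * M) i j = 0 := by
    intro i j hi
    have hVM : V * M =
        (fromBlocks 1 0 0 0 : Matrix (Fin M.rank ⊕ Fin _) _ k).submatrix e e * U⁻¹ := by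
      rw [← h, Matrix.mul_assoc, hUU, Matrix.mul_one]
    have : (V.submatrix σ.symm id * M) i j = (V * M) (σ.symm i) j := by
      simp [Matrix.mul_apply]
    rw [this, hVM, Matrix.mul_apply]
    refine Finset.sum_eq_zero fun l _ => ?_
    have he : ∃ i', e (σ.symm i) = Sum.inr i' := by
      rcases h' : e (σ.symm i) with i' | i'
      · have h2 : i = σ (σ.symm i) := by simp
        have h3 : (i : ℕ) = i' := by
          rw [h2]
          simp only [σ, Equiv.trans_apply]
          simp [σ] at h'
          simp [h']
        omega
      · exact ⟨i', rfl⟩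
    obtain ⟨i', hi'⟩ := he
    rw [submatrix_apply, hi']
    rcases e l with l' | l' <;> simp
  refine ⟨V.submatrix σ.symm id, V⁻¹.submatrix id σ.symm, ?_, ?_⟩
  · rw [← submatrix_mul _ _ _ _ _ Function.bijective_id, hVV]
    simp
  · set M' := V.submatrix σ.symm id * M * V⁻¹.submatrix id σ.symm with hM'
    have hrow' : ∀ i j : Fin (s + c), s ≤ i → M' i j = 0 := by
      intro i j hi
      rw [hM', Matrix.mul_apply]
      exact Finset.sum_eq_zero fun l _ => by rw [hrow i l (hM.trans hi), zero_mul]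
    refine ⟨(M'.submatrix finSumFinEquiv finSumFinEquiv).toBlocks₁₁,
      (M'.submatrix finSumFinEquiv finSumFinEquiv).toBlocks₁₂, ?_⟩
    ext i j
    refine Fin.addCases (fun i => ?_) (fun i => ?_) i <;>
      refine Fin.addCases (fun j => ?_) (fun j => ?_) j <;>
      simp [extendByZero, hrow', toBlocks₁₁, toBlocks₁₂]

lemma trace_extendByZero (K : Matrix (Fin s) (Fin s) k) (L : Matrix (Fin s) (Fin c) k) :
    (extendByZero K L).trace = K.trace := by
  simp [Matrix.trace, extendByZero, Fin.sum_univ_add]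

lemma IsPolyMap.krylovMatrix {F : k → Matrix (Fin s) (Fin s) k} (hF : IsPolyMap F)
    (w : Fin s → k) : IsPolyMap fun t => krylovMatrix (F t) w := by
  choose G hG using fun j : Fin s =>
    (hF.pow (j : ℕ)).mul (IsPolyMap.const (Matrix.of fun (i : Fin s) (_ : Unit) => w i))
  refine ⟨Matrix.of fun i j => G j i (), fun t => ?_⟩
  ext i j
  have := congrFun (congrFun (hG j t) i) ()
  simpa [_root_.krylovMatrix, Matrix.mul_apply, mulVec, dotProduct] using this

/-- There is an invertible traceless matrix with a cyclic vector. -/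
lemma exists_cyclic_traceless (hs : 2 ≤ s) :
    ∃ (C : Matrix (Fin s) (Fin s) k) (w : Fin s → k),
      C.trace = 0 ∧ C.det ≠ 0 ∧ (krylovMatrix C w).det ≠ 0 := by
  obtain ⟨n, rfl⟩ : ∃ n, s = n + 2 := ⟨s - 2, by omega⟩
  let σ : Equiv.Perm (Fin (n + 2)) := (finRotate (n + 2)).symm
  refine ⟨σ.permMatrix k, Pi.single 0 1, ?_, ?_, ?_⟩
  · refine Finset.sum_eq_zero fun i _ => ?_
    have : σ i ≠ i := by
      intro h
      have h' := (Equiv.symm_apply_eq _).mp h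
      simp at h'
    simp [Equiv.Perm.permMatrix, PEquiv.toMatrix_apply, this]
  · rw [det_permutation]
    rcases Int.units_eq_one_or (Equiv.Perm.sign σ) with h | h <;> simp [h]
  · have hpow : ∀ j (hj : j < n + 2),
        σ.permMatrix k ^ j *ᵥ Pi.single 0 1 = Pi.single (⟨j, hj⟩ : Fin (n + 2)) 1 := by
      intro j
      induction j with
      | zero => intro _; rw [pow_zero, one_mulVec]; rfl
      | succ j ih =>
        intro hj
        rw [pow_succ', ← mulVec_mulVec, ih (by omega)]
        ext i
        rw [permMatrix_mulVec]
        have : σ i = ⟨j, by omega⟩ ↔ i = ⟨j + 1, hj⟩ := by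
          rw [Equiv.symm_apply_eq, finRotate_apply]
          rw [show (⟨j, by omega⟩ : Fin (n+2)) + 1 = ⟨j + 1, hj⟩ by
            ext; simp [Fin.val_add]; omega]
        simp [Pi.single_apply, this]
    have : krylovMatrix (σ.permMatrix k) (Pi.single 0 1) = 1 := by
      ext i j
      rw [krylovMatrix, of_apply, hpow j j.2, Pi.single_apply, Matrix.one_apply]
    simp [this]

variable [Infinite k] {p : ℕ} {lam : Fin p → ℕ}

lemma mem_zClosure_tangentUnion_of_rank_le (hsum : ∑ l, lam l = s + c) {q : ℕ}
    (hq1 : 1 ≤ q) (hs : s = 2 * q + 1 ∨ s = 2 * q + 2) (hq : q < ∑ l, (lam l - 1))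
    (hq' : ∀ n, 1 ≤ n → q < ∑ l, (lam l - n) → ∑ l, (lam l - n) ≤ ∑ l, (lam l - (n + 1)) + q)
    {M : Matrix (Fin (s + c)) (Fin (s + c)) k} (htr : M.trace = 0) (hM : M.rank ≤ s) :
    M ∈ zClosure (tangentUnion k (s + c) lam) := by
  obtain ⟨g, g', hg, K, L, hKL⟩ := exists_conj_eq_extendByZero M hM
  have hg' : g' * g = 1 := mul_eq_one_comm.mp hg
  have htrK : K.trace = 0 := by
    rw [← trace_extendByZero K L, ← hKL, trace_mul_comm, ← Matrix.mul_assoc, hg', Matrix.one_mul,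
      htr]
  have hMK : M = g' * extendByZero K L * g := by
    rw [← hKL]
    calc M = (g' * g) * M * (g' * g) := by simp [hg']
      _ = _ := by simp only [Matrix.mul_assoc]
  obtain ⟨C, w, htrC, hdetC, hkC⟩ := exists_cyclic_traceless (k := k) (s := s) (by omega)
  have hline := IsPolyMap.line K C
  have hF := ((IsPolyMap.const g').mul
    (IsPolyMap.line (extendByZero K L) (extendByZero C L))).mul (IsPolyMap.const g)
  have key := hF.mem_zClosure (S := tangentUnion k (s + c) lam)
    (hline.det.mul (hline.krylovMatrix w).det) (t₁ := 1) (by simp [hdetC, hkC]) ?_ 0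
  · rw [hMK]
    simpa using key
  intro t ht
  have hext : (1 - t) • extendByZero K L + t • extendByZero C L =
      extendByZero ((1 - t) • K + t • C) L := by
    ext i j
    refine Fin.addCases (fun i => ?_) (fun i => ?_) i <;>
      refine Fin.addCases (fun j => ?_) (fun j => ?_) j <;> simp [extendByZero]
    ring
  rw [hext]
  have hcyc : IsShiftCommutator q ((1 - t) • K + t • C) :=
    exists_commutator_shiftMatrix (right_ne_zero_of_mul ht) (by simp [htrK, htrC]) hq1 hs
  obtain ⟨h, h', hh, hL⟩ := exists_extendByZero_conj (left_ne_zero_of_mul ht) L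
  rw [hL]
  obtain ⟨a, Q, Q', hQ, hfin⟩ :=
    ((hcyc.extendByZero (c := c) (by omega)).conj hh).conj hg'
  rw [hfin]
  exact commutator_shiftMatrix_mem_zClosure hsum hq hq' hQ a

end BoundedRank

/-! ### Square roots of invertible matrices -/

section SquareRoot

open Polynomial

variable {k : Type*} [Field k] [IsAlgClosed k] [CharZero k]

/-- Modulo a polynomial not vanishing at zero, `X` is a square. -/
lemma exists_dvd_sq_sub_X {f : k[X]} (hf : f.eval 0 ≠ 0) : ∃ g : k[X], f ∣ g ^ 2 - X := by
  classical
  have hf0 : f ≠ 0 := by rintro rfl; simp at hf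
  choose r hr using fun a : k => IsAlgClosed.exists_pow_nat_eq a (n := 2) (by norm_num)
  let g₀ : k[X] := Lagrange.interpolate f.roots.toFinset id r
  have hg₀ : ∀ a ∈ f.roots, X - C a ∣ g₀ ^ 2 - X := by
    intro a ha
    rw [dvd_iff_isRoot]
    have : g₀.eval a = r a := Lagrange.eval_interpolate_at_node (v := id) r
      Function.injective_id.injOn (Multiset.mem_toFinset.mpr ha)
    simp [this, hr]
  have hdvd : f ∣ (g₀ ^ 2 - X) ^ f.roots.card := by
    conv_lhs => rw [(IsAlgClosed.splits f).eq_prod_roots]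
    rw [C_mul_dvd (leadingCoeff_ne_zero.mpr hf0)]
    simpa using Multiset.prod_dvd_prod_of_dvd (fun a => X - C a) (fun _ => g₀ ^ 2 - X) hg₀
  let π : k[X] →+* AdjoinRoot f := AdjoinRoot.mk f
  have hX : IsUnit (π X) := by
    have : IsCoprime (X : k[X]) f := by
      rw [irreducible_X.coprime_iff_not_dvd, X_dvd_iff, coeff_zero_eq_eval_zero]
      exact hf
    obtain ⟨u, v, huv⟩ := this
    refine .of_mul_eq_one_right (π u) ?_
    rw [← map_mul, ← map_one π, ← huv, map_add, map_mul π v f]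
    simp [π]
  have hnil : IsNilpotent (π g₀ ^ 2 - π X) := by
    refine ⟨f.roots.card, ?_⟩
    rw [← map_pow, ← map_sub, ← map_pow]
    exact AdjoinRoot.mk_eq_zero.mpr hdvd
  have hunit : IsUnit (π g₀) := by
    have := hnil.isUnit_add_left_of_commute hX (Commute.all _ _)
    rw [add_sub_cancel] at this
    exact (isUnit_pow_iff two_ne_zero).mp this
  let P : (AdjoinRoot f)[X] := X ^ 2 - C (π X)
  obtain ⟨y, ⟨-, hy⟩, -⟩ := existsUnique_nilpotent_sub_and_aeval_eq_zero (P := P) (x := π g₀)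
    (by simpa [P] using hnil) (by
      have h2 : IsUnit (algebraMap k (AdjoinRoot f) 2) :=
        (IsUnit.mk0 (2 : k) two_ne_zero).map _
      rw [map_ofNat] at h2
      simpa [P, one_add_one_eq_two] using h2.mul hunit)
  obtain ⟨g, rfl⟩ := AdjoinRoot.mk_surjective y
  refine ⟨g, AdjoinRoot.mk_eq_zero.mp ?_⟩
  simpa [P, π] using hy

lemma exists_sq_eq_of_det_ne_zero {n : Type*} [Fintype n] [DecidableEq n] (M : Matrix n n k)
    (hM : M.det ≠ 0) : ∃ S : Matrix n n k, S * S = M := by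
  obtain ⟨g, h, hg⟩ := exists_dvd_sq_sub_X (f := M.charpoly) (by
    rw [← coeff_zero_eq_eval_zero]
    intro h
    rw [M.det_eq_sign_charpoly_coeff, h, mul_zero] at hM
    exact hM rfl)
  refine ⟨aeval M g, ?_⟩
  have := congrArg (aeval M) hg
  rw [map_mul, M.aeval_self_charpoly, zero_mul, map_sub, map_pow, aeval_X, sub_eq_zero, sq] at this
  exact this

end SquareRoot

/-! ### Rank factorizations -/

section RankFactorization

variable {k : Type*} [Field k] {N r : ℕ}

lemma exists_rank_factorization (M : Matrix (Fin N) (Fin N) k) (hr : M.rank = r) :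
    ∃ (U : Matrix (Fin N) (Fin r) k) (V : Matrix (Fin r) (Fin N) k)
      (L : Matrix (Fin r) (Fin N) k) (R : Matrix (Fin N) (Fin r) k),
      M = U * V ∧ L * U = 1 ∧ V * R = 1 := by
  subst hr
  obtain ⟨A, B, e, hA, hB, h⟩ := exists_rank_normal_form M
  have hA' : A⁻¹ * A = 1 := nonsing_inv_mul A ((isUnit_iff_isUnit_det A).mp hA)
  have hA'' : A * A⁻¹ = 1 := mul_eq_one_comm.mp hA'
  have hB' : B * B⁻¹ = 1 := mul_nonsing_inv B ((isUnit_iff_isUnit_det B).mp hB)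
  have hB'' : B⁻¹ * B = 1 := mul_eq_one_comm.mp hB'
  let E : Matrix (Fin N) (Fin M.rank) k := (fromRows 1 0).submatrix e id
  let E' : Matrix (Fin M.rank) (Fin N) k := (fromCols 1 0).submatrix id e
  have hEE' : E * E' = A * M * B := by
    rw [h, ← submatrix_mul _ _ _ _ _ Function.bijective_id, fromRows_mul_fromCols]
    simp
  have hE'E : E' * E = 1 := by
    rw [submatrix_mul_equiv, fromCols_mul_fromRows]
    simp
  refine ⟨A⁻¹ * E, E' * B⁻¹, E' * A, B * E, ?_, ?_, ?_⟩
  · calc M = (A⁻¹ * A) * M * (B * B⁻¹) := by rw [hA', hB', Matrix.one_mul, Matrix.mul_one]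
      _ = A⁻¹ * (A * M * B) * B⁻¹ := by simp only [Matrix.mul_assoc]
      _ = _ := by rw [← hEE']; simp only [Matrix.mul_assoc]
  · calc E' * A * (A⁻¹ * E) = E' * (A * A⁻¹) * E := by simp only [Matrix.mul_assoc]
      _ = 1 := by rw [hA'', Matrix.mul_one, hE'E]
  · calc E' * B⁻¹ * (B * E) = E' * (B⁻¹ * B) * E := by simp only [Matrix.mul_assoc]
      _ = 1 := by rw [hB'', Matrix.mul_one, hE'E]

lemma eq_zero_of_rank_eq_zero {M : Matrix (Fin N) (Fin N) k} (h : M.rank = 0) : M = 0 := by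
  obtain ⟨U, V, -, -, rfl, -⟩ := exists_rank_factorization M h
  ext i j
  simp [Matrix.mul_apply]

lemma rank_add_le_of_rank_eq {x y : Matrix (Fin N) (Fin N) k} (hx : x.rank = r) (hy : y.rank = r) :
    (x + y).rank ≤ 2 * r := by
  obtain ⟨U, V, -, -, rfl, -⟩ := exists_rank_factorization x hx
  obtain ⟨U', V', -, -, rfl, -⟩ := exists_rank_factorization y hy
  rw [← fromCols_mul_fromRows]
  refine (rank_mul_le_left _ _).trans ((rank_le_card_width _).trans ?_)
  simp [two_mul]

lemma rank_mul_eq_of_mul_eq_one {U : Matrix (Fin N) (Fin r) k} {V L : Matrix (Fin r) (Fin N) k}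
    {R : Matrix (Fin N) (Fin r) k} (hL : L * U = 1) (hR : V * R = 1) : (U * V).rank = r := by
  refine le_antisymm ?_ ?_
  · simpa using (rank_mul_le_left U V).trans (rank_le_card_width U)
  · have h : L * (U * V) * R = 1 := by
      rw [← Matrix.mul_assoc, hL, Matrix.one_mul, hR]
    calc r = (L * (U * V) * R).rank := by rw [h, rank_one, Fintype.card_fin]
      _ ≤ _ := (rank_mul_le_left _ _).trans (rank_mul_le_right _ _)

end RankFactorization

/-! ### Secants of orbits of matrices which are not square-zero -/

section Secant

variable {k : Type*} [Field k] {N p : ℕ} {lam : Fin p → ℕ}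

lemma trace_eq_zero_of_mem_jordanOrbit (hsum : ∑ l, lam l = N) {x : Matrix (Fin N) (Fin N) k}
    (hx : x ∈ jordanOrbit k N lam) : x.trace = 0 := by
  have h : (x ^ (N + 1)).rank = 0 := by
    rw [hx (N + 1) (by omega)]
    refine Finset.sum_eq_zero fun l _ => ?_
    have := Finset.single_le_sum (f := lam) (fun i _ => Nat.zero_le _) (Finset.mem_univ l)
    omega
  have hnil : IsNilpotent x := ⟨N + 1, eq_zero_of_rank_eq_zero h⟩
  exact (isNilpotent_trace_of_isNilpotent hnil).eq_zero

/-- The numerical choice of a shift matrix adapted to a partition with a part `≥ 3`. -/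
lemma exists_shift_parameters (hsum : ∑ l, lam l = N) (h2 : ∑ l, (lam l - 2) ≠ 0) :
    ∃ s c q, N = s + c ∧ 1 ≤ q ∧ (s = 2 * q + 1 ∨ s = 2 * q + 2) ∧ q < ∑ l, (lam l - 1) ∧
      (∀ n, 1 ≤ n → q < ∑ l, (lam l - n) →
        ∑ l, (lam l - n) ≤ ∑ l, (lam l - (n + 1)) + q) ∧
      min (2 * ∑ l, (lam l - 1)) N ≤ s := by
  have h21 : ∑ l, (lam l - 2) < ∑ l, (lam l - 1) := by
    obtain ⟨l, -, hl⟩ := Finset.exists_ne_zero_of_sum_ne_zero h2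
    exact Finset.sum_lt_sum (fun i _ => by omega) ⟨l, Finset.mem_univ l, by omega⟩
  have hconv : ∀ n, ∑ l, (lam l - n) + ∑ l, (lam l - 1) ≤ ∑ l, (lam l - (n + 1)) + N := by
    intro n
    rw [← hsum, ← Finset.sum_add_distrib, ← Finset.sum_add_distrib]
    exact Finset.sum_le_sum fun l _ => by omega
  have h1 := hconv 1
  rw [show 1 + 1 = 2 from rfl] at h1
  rcases le_or_gt (2 * ∑ l, (lam l - 1)) N with h | h
  · refine ⟨2 * ∑ l, (lam l - 1), N - 2 * ∑ l, (lam l - 1), ∑ l, (lam l - 1) - 1, by omega,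
      by omega, by omega, by omega, fun n hn hlt => ?_, by omega⟩
    rcases hn.lt_or_eq with hn | rfl
    · have : ∑ l, (lam l - n) ≤ ∑ l, (lam l - 2) := Finset.sum_le_sum fun l _ => by omega
      omega
    · rw [show 1 + 1 = 2 from rfl]
      omega
  · refine ⟨N, 0, (N - 1) / 2, by omega, by omega, by omega, by omega, fun n _ _ => ?_, by omega⟩
    have := hconv n
    omega

lemma secant_subset_of_sum_ne_zero [Infinite k] (hsum : ∑ l, lam l = N)
    (h2 : ∑ l, (lam l - 2) ≠ 0) :
    Set.image2 (· + ·) (jordanOrbit k N lam) (jordanOrbit k N lam) ⊆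
      zClosure (tangentUnion k N lam) := by
  rintro _ ⟨x, hx, y, hy, rfl⟩
  obtain ⟨s, c, q, rfl, hq1, hs, hq, hq', hmin⟩ := exists_shift_parameters hsum h2
  refine mem_zClosure_tangentUnion_of_rank_le hsum hq1 hs hq hq' ?_ (le_trans ?_ hmin)
  · rw [trace_add, trace_eq_zero_of_mem_jordanOrbit hsum hx,
      trace_eq_zero_of_mem_jordanOrbit hsum hy, add_zero]
  · refine le_min (rank_add_le_of_rank_eq ?_ ?_) (by simpa using rank_le_card_width (x + y))
    · simpa using hx 1 le_rfl
    · simpa using hy 1 le_rfl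

end Secant

/-! ### Secants of orbits of square-zero matrices -/

section SquareZero

variable {k : Type*} [Field k] {N p : ℕ} {lam : Fin p → ℕ} {r : ℕ}

lemma mem_jordanOrbit_iff_of_sum_eq_zero (h2 : ∑ l, (lam l - 2) = 0)
    {x : Matrix (Fin N) (Fin N) k} :
    x ∈ jordanOrbit k N lam ↔ x * x = 0 ∧ x.rank = ∑ l, (lam l - 1) := by
  have hzero : ∀ i, 2 ≤ i → ∑ l, (lam l - i) = 0 := fun i hi => Nat.le_zero.mp
    (h2 ▸ Finset.sum_le_sum fun l _ => by omega)
  refine ⟨fun hx => ⟨?_, by simpa using hx 1 le_rfl⟩, fun ⟨hsq, hr⟩ i hi => ?_⟩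
  · rw [← sq]
    exact eq_zero_of_rank_eq_zero ((hx 2 (by norm_num)).trans h2)
  · rcases hi.lt_or_eq with hi | rfl
    · rw [hzero i hi, pow_eq_zero_of_le hi (by rw [sq, hsq]), rank_zero]
    · simpa using hr

/-- The generic sum of two square-zero matrices of the same rank is a commutator with another such
matrix. -/
lemma add_mem_tangentUnion [IsAlgClosed k] [CharZero k] (h1 : ∑ l, (lam l - 1) = r)
    (h2 : ∑ l, (lam l - 2) = 0)
    {U U' : Matrix (Fin N) (Fin r) k} {V V' : Matrix (Fin r) (Fin N) k}
    (hVU : V * U = 0) (hVU' : V' * U' = 0) (hA : (V * U').det ≠ 0) (hB : (V' * U).det ≠ 0) :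
    U * V + U' * V' ∈ tangentUnion k N lam := by
  set A := V * U' with hAdef
  set B := V' * U with hBdef
  have hA' : A * A⁻¹ = 1 := mul_nonsing_inv A (IsUnit.mk0 _ hA)
  have hA'' : A⁻¹ * A = 1 := mul_eq_one_comm.mp hA'
  have hB' : B * B⁻¹ = 1 := mul_nonsing_inv B (IsUnit.mk0 _ hB)
  obtain ⟨S, hS⟩ := exists_sq_eq_of_det_ne_zero (A * B) (by rw [det_mul]; exact mul_ne_zero hA hB)
  obtain ⟨T, hT⟩ : ∃ T, T * A * T = B := by
    refine ⟨A⁻¹ * S, ?_⟩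
    calc A⁻¹ * S * A * (A⁻¹ * S) = A⁻¹ * S * (A * A⁻¹) * S := by simp only [Matrix.mul_assoc]
      _ = A⁻¹ * (S * S) := by rw [hA', Matrix.mul_one, Matrix.mul_assoc]
      _ = B := by rw [hS, ← Matrix.mul_assoc, hA'', Matrix.one_mul]
  set X := fromCols U U' with hX
  set Y := fromRows V V' with hY
  let K := fromBlocks 0 A B 0
  let K' := fromBlocks 0 B⁻¹ A⁻¹ 0
  have hK : Y * X = K := by
    rw [hX, hY, fromRows_mul_fromCols, hVU, hVU']
  have hKK' : K * K' = 1 := by simp [K, K', fromBlocks_multiply, hA', hB']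
  have hK'K : K' * K = 1 := mul_eq_one_comm.mp hKK'
  have hYX : ∀ {n : Type} (W : Matrix (Fin r ⊕ Fin r) n k), Y * (X * (K' * W)) = W := fun W => by
    rw [← Matrix.mul_assoc, hK, ← Matrix.mul_assoc, hKK', Matrix.one_mul]
  let H : Matrix (Fin r ⊕ Fin r) (Fin r ⊕ Fin r) k := fromBlocks 1 0 0 0
  let W := fromRows A (T * A)
  let W' := fromCols (-T) (1 : Matrix (Fin r) (Fin r) k)
  have hW'W : W' * W = 0 := by simp [W, W', fromCols_mul_fromRows]
  have hcomm : H * (W * W') - (W * W') * H = K := by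
    simp only [H, W, W', K, fromRows_mul_fromCols, fromBlocks_multiply, sub_eq_add_neg,
      fromBlocks_neg, fromBlocks_add]
    simp [hT]
  refine ⟨X * (K' * (H * Y)), X * (K' * W) * (W' * Y), ?_, ?_⟩
  · rw [mem_jordanOrbit_iff_of_sum_eq_zero h2, h1]
    constructor
    · calc X * (K' * W) * (W' * Y) * (X * (K' * W) * (W' * Y))
          = X * (K' * W) * (W' * (Y * (X * (K' * W))) * (W' * Y)) := by simp only [Matrix.mul_assoc]
        _ = 0 := by rw [hYX, hW'W]; simp
    · let E : Matrix (Fin r) (Fin r ⊕ Fin r) k := fromCols A⁻¹ 0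
      let E' : Matrix (Fin r ⊕ Fin r) (Fin r) k := fromRows 0 1
      have hE : E * Y * (X * (K' * W)) = 1 := by
        rw [Matrix.mul_assoc, hYX]
        simp [E, W, fromCols_mul_fromRows, hA'']
      have hE' : W' * Y * (X * (K' * E')) = 1 := by
        rw [Matrix.mul_assoc, hYX]
        simp [E', W', fromCols_mul_fromRows]
      exact rank_mul_eq_of_mul_eq_one hE hE'
  · have haz : X * (K' * (H * Y)) * (X * (K' * W) * (W' * Y)) = X * (K' * (H * (W * W') * Y)) := by
      calc _ = X * (K' * (H * (Y * (X * (K' * W)) * (W' * Y)))) := by simp only [Matrix.mul_assoc]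
        _ = _ := by rw [hYX]; simp only [Matrix.mul_assoc]
    have hza : X * (K' * W) * (W' * Y) * (X * (K' * (H * Y))) = X * (K' * (W * W' * H * Y)) := by
      calc _ = X * (K' * (W * (W' * (Y * (X * (K' * (H * Y))))))) := by simp only [Matrix.mul_assoc]
        _ = _ := by rw [hYX]; simp only [Matrix.mul_assoc]
    rw [haz, hza, ← Matrix.mul_sub, ← Matrix.mul_sub, ← Matrix.sub_mul, hcomm, ← Matrix.mul_assoc K',
      hK'K, Matrix.one_mul, hX, hY, fromCols_mul_fromRows]

lemma exists_det_ne_zero_and_det_mul_mul_ne_zero [Infinite k] {U R : Matrix (Fin N) (Fin r) k}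
    {V L : Matrix (Fin r) (Fin N) k} (hL : L * U = 1) (hR : V * R = 1) :
    ∃ g : Matrix (Fin N) (Fin N) k, g.det ≠ 0 ∧ (V * g * U).det ≠ 0 := by
  have hline := IsPolyMap.line (1 : Matrix (Fin N) (Fin N) k) (R * L)
  obtain ⟨u, hu, hu'⟩ := hline.det.exists_ne_zero
    (((IsPolyMap.const V).mul hline).mul (IsPolyMap.const U)).det (s := 0) (t := 1) (by simp) (by
      have : V * (R * L) * U = 1 := by
        rw [← Matrix.mul_assoc, hR, Matrix.one_mul, hL]
      simp [this])
  exact ⟨_, hu, hu'⟩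

lemma exists_generic_conj [Infinite k] {U U' R R' : Matrix (Fin N) (Fin r) k}
    {V V' L L' : Matrix (Fin r) (Fin N) k}
    (hL : L * U = 1) (hR : V * R = 1) (hL' : L' * U' = 1) (hR' : V' * R' = 1) :
    ∃ g : Matrix (Fin N) (Fin N) k,
      g.det ≠ 0 ∧ (V * g * U').det ≠ 0 ∧ (V' * g.adjugate * U).det ≠ 0 := by
  obtain ⟨g, hg, hg'⟩ := exists_det_ne_zero_and_det_mul_mul_ne_zero hL' hR
  obtain ⟨h, hh, hh'⟩ := exists_det_ne_zero_and_det_mul_mul_ne_zero hL hR'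
  have hline := IsPolyMap.line g h⁻¹
  obtain ⟨u, hu, hu'⟩ :=
    (hline.det.mul (((IsPolyMap.const V).mul hline).mul (IsPolyMap.const U')).det).exists_ne_zero
      (((IsPolyMap.const V').mul hline.adjugate).mul (IsPolyMap.const U)).det (s := 0) (t := 1)
      (by simp [hg, hg']) (by
        have hdet : h⁻¹.det ≠ 0 := by
          rw [det_nonsing_inv, Ring.inverse_eq_inv']
          exact inv_ne_zero hh
        simp only [sub_self, zero_smul, one_smul, zero_add]
        rw [adjugate_eq_det_smul_inv hdet, nonsing_inv_nonsing_inv _ (IsUnit.mk0 _ hh),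
          Matrix.mul_smul, Matrix.smul_mul, det_smul]
        exact mul_ne_zero (pow_ne_zero _ hdet) hh')
  exact ⟨_, left_ne_zero_of_mul hu, right_ne_zero_of_mul hu, hu'⟩

lemma secant_subset_of_sum_eq_zero [IsAlgClosed k] [CharZero k] (h2 : ∑ l, (lam l - 2) = 0) :
    Set.image2 (· + ·) (jordanOrbit k N lam) (jordanOrbit k N lam) ⊆
      zClosure (tangentUnion k N lam) := by
  rintro _ ⟨x, hx, y, hy, rfl⟩
  rw [mem_jordanOrbit_iff_of_sum_eq_zero h2] at hx hy
  obtain ⟨U, V, L, R, rfl, hL, hR⟩ := exists_rank_factorization x hx.2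
  obtain ⟨U', V', L', R', rfl, hL', hR'⟩ := exists_rank_factorization y hy.2
  have hVU : V * U = 0 := by
    calc V * U = (L * U) * (V * U) * (V * R) := by rw [hL, hR, Matrix.one_mul, Matrix.mul_one]
      _ = L * (U * V * (U * V)) * R := by simp only [Matrix.mul_assoc]
      _ = 0 := by rw [hx.1]; simp
  have hVU' : V' * U' = 0 := by
    calc V' * U' = (L' * U') * (V' * U') * (V' * R') := by
          rw [hL', hR', Matrix.one_mul, Matrix.mul_one]
      _ = L' * (U' * V' * (U' * V')) * R' := by simp only [Matrix.mul_assoc]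
      _ = 0 := by rw [hy.1]; simp
  obtain ⟨g, hg, hA, hB⟩ := exists_generic_conj hL hR hL' hR'
  have hline := IsPolyMap.line (1 : Matrix (Fin N) (Fin N) k) g
  have hF := (IsPolyMap.const (U * V)).add
    ((hline.mul (IsPolyMap.const (U' * V'))).mul hline.adjugate)
  have key := hF.mem_zClosure (S := tangentUnion k N lam)
    ((((IsPolyMap.const V).mul hline).mul (IsPolyMap.const U')).det.mul
      (((IsPolyMap.const V').mul hline.adjugate).mul (IsPolyMap.const U)).det)
    (t₁ := 1) (by simp [hA, hB]) ?_ 0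
  · simpa using key
  intro t ht
  have htA := left_ne_zero_of_mul ht
  have htB := right_ne_zero_of_mul ht
  set g' := (1 - t) • (1 : Matrix (Fin N) (Fin N) k) + t • g
  have hsum := add_mem_tangentUnion rfl h2 (U := U) (V := V) (U' := g' * U') (V' := V' * g'.adjugate)
    hVU (by
      calc V' * g'.adjugate * (g' * U') = V' * (g'.adjugate * g') * U' := by
            simp only [Matrix.mul_assoc]
        _ = 0 := by
          rw [adjugate_mul, Matrix.mul_smul, Matrix.mul_one, Matrix.smul_mul, hVU', smul_zero])
    (by rwa [← Matrix.mul_assoc]) htB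
  refine subset_zClosure ?_
  have h : g' * (U' * V') * g'.adjugate = g' * U' * (V' * g'.adjugate) := by
    simp only [Matrix.mul_assoc]
  rw [h]
  exact hsum

end SquareZero

/-- The conical secant variety of a nilpotent orbit `O_λ ⊂ sl_N` coincides with the
closure of the union of its embedded tangent spaces `[gl_N, x]`, i.e. with the closure
of the image of the moment map of the cotangent bundle of the orbit. -/
theorem stmt13 {k : Type*} [Field k] [IsAlgClosed k] [CharZero k]
    {N p : ℕ} (lam : Fin p → ℕ)
    (hanti : Antitone lam) (hpos : ∀ l, 1 ≤ lam l)
    (hsum : ∑ l, lam l = N) :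
    zClosure (Set.image2 (· + ·) (jordanOrbit k N lam) (jordanOrbit k N lam))
      = zClosure {M : Matrix (Fin N) (Fin N) k |
          ∃ a : Matrix (Fin N) (Fin N) k, ∃ x ∈ jordanOrbit k N lam,
            M = a * x - x * a} := by
  refine Set.Subset.antisymm (zClosure_subset_zClosure ?_)
    (zClosure_subset_zClosure tangentUnion_subset_zClosure_secant)
  by_cases h2 : ∑ l, (lam l - 2) = 0
  · exact secant_subset_of_sum_eq_zero h2
  · exact secant_subset_of_sum_ne_zero hsum h2
end
end

section
/- Let k be an algebraically closed field of characteristic 0 and λ = (2^r, 1^{N−2r}) with 1 ≤ r and 2r ≤ N. Then the Zariski closure in Mat_N(k) of the set {x + y : x, y ∈ O_λ} equals the Zariski closure of the set of all matrices of the form g·D·g⁻¹, where g ∈ GL_N(k) and D is the diagonal matrix diag(μ₁, …, μ_r, 0, …, 0, −μ_r, …, −μ₁) with μ₁, …, μ_r ∈ k arbitrary; that is, CS(O_λ) is the closure of the union of GL_N-orbits through the r-dimensional toral subspace t_{O_λ}. -/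
open Matrix

noncomputable section

/-- The partition `(2^r, 1^{N-2r})` of `N`, with `N - r` parts. -/
def twoOneLam (N r : ℕ) : Fin (N - r) → ℕ := fun l => if (l : ℕ) < r then 2 else 1

/-- The diagonal vector `(μ₁, …, μ_r, 0, …, 0, −μ_r, …, −μ₁)` of length `N`. -/
def dvec {k : Type*} [Field k] (N r : ℕ) (μ : Fin r → k) : Fin N → k := fun i =>
  if h : (i : ℕ) < r then μ ⟨(i : ℕ), h⟩
  else if h2 : N - 1 - (i : ℕ) < r then -μ ⟨N - 1 - (i : ℕ), h2⟩
  else 0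

theorem exists_unit_extending {k n ι : Type*} [Field k] [Fintype n] [DecidableEq n] [Fintype ι]
    [DecidableEq ι] (e : ι ↪ n) (P : Matrix n ι k) (Q : Matrix ι n k) (h : Q * P = 1) :
    ∃ g : (Matrix n n k)ˣ, (g : Matrix n n k).submatrix id e = P ∧
      ((g⁻¹ : (Matrix n n k)ˣ) : Matrix n n k).submatrix e id = Q := by
  classical
  let κ := {a : n // a ∉ Set.range e}
  have hsurj : Function.Surjective Q.mulVecLin := fun y => ⟨P *ᵥ y, by simp [h]⟩
  have hcard : Module.finrank k (LinearMap.ker Q.mulVecLin) = Fintype.card κ := by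
    have h1 := Q.mulVecLin.finrank_range_add_finrank_ker
    rw [LinearMap.range_eq_top.2 hsurj, finrank_top] at h1
    have h2 : Fintype.card κ = Fintype.card n - Fintype.card ι := by
      rw [Fintype.card_subtype_compl]
      congr 1
      exact (Fintype.card_congr (Equiv.ofInjective e e.injective)).symm
    simp only [Module.finrank_fintype_fun_eq_card] at h1
    omega
  let b := Module.finBasisOfFinrankEq k _ hcard
  let b' := b.reindex (Fintype.equivFin κ).symm
  let R : Matrix n κ k := Matrix.of fun i j => (b' j : n → k) i
  have hQR : Q * R = 0 := by
    ext i j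
    have := congrFun (LinearMap.mem_ker.1 (b' j).2) i
    exact this
  have hR : Function.Injective R.mulVec := by
    rw [Matrix.mulVec_injective_iff]
    exact b'.linearIndependent.map' (LinearMap.ker Q.mulVecLin).subtype (Submodule.ker_subtype _)
  let Q0 : Matrix ι n k := (1 : Matrix n n k).submatrix e id
  let Q1 : Matrix κ n k := (1 : Matrix n n k).submatrix Subtype.val id
  let g : Matrix n n k := P * Q0 + R * Q1
  have hQg : Q * g = Q0 := by
    simp only [g, Matrix.mul_add, ← Matrix.mul_assoc, h, hQR]
    simp
  have hQ0 : ∀ (v : n → k) i, (Q0 *ᵥ v) i = v (e i) := by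
    intro v i
    simp [Q0, Matrix.mulVec, dotProduct, Matrix.one_apply]
  have hQ1 : ∀ (v : n → k) (i : κ), (Q1 *ᵥ v) i = v i := by
    intro v i
    simp [Q1, Matrix.mulVec, dotProduct, Matrix.one_apply]
  have hg : IsUnit g := by
    rw [← Matrix.mulVec_injective_iff_isUnit]
    refine (injective_iff_map_eq_zero g.mulVecLin).2 fun v hv => ?_
    rw [Matrix.mulVecLin_apply] at hv
    have h0 : Q0 *ᵥ v = 0 := by rw [← hQg, ← Matrix.mulVec_mulVec, hv, Matrix.mulVec_zero]
    have h1 : Q1 *ᵥ v = 0 := by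
      apply hR
      simp only [g, Matrix.add_mulVec, ← Matrix.mulVec_mulVec, h0] at hv
      simpa using hv
    ext a
    by_cases ha : a ∈ Set.range e
    · obtain ⟨i, rfl⟩ := ha
      rw [← hQ0 v i, h0]; rfl
    · exact (hQ1 v ⟨a, ha⟩).symm.trans (congrFun h1 ⟨a, ha⟩)
  obtain ⟨u, hu⟩ := hg
  refine ⟨u, ?_, ?_⟩
  · have h0 : Q0.submatrix id e = 1 := by
      ext i j; simp [Q0, Matrix.one_apply]
    have h1 : Q1.submatrix id e = 0 := by
      ext i j
      have : (i : n) ≠ e j := fun hh => i.2 ⟨j, hh.symm⟩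
      simp [Q1, this]
    rw [hu]
    ext i j
    have h0' : ∀ a, Q0 a (e j) = (1 : Matrix ι ι k) a j := fun a => congrFun (congrFun h0 a) j
    have h1' : ∀ a, Q1 a (e j) = 0 := fun a => congrFun (congrFun h1 a) j
    simp [g, Matrix.mul_apply, h0', h1', Matrix.one_apply]
  · have : Q = Q0 * ((u⁻¹ : (Matrix n n k)ˣ) : Matrix n n k) := by
      rw [← hQg, ← hu, Matrix.mul_assoc, Units.mul_inv, Matrix.mul_one]
    rw [this]
    ext i j
    simp [Q0, Matrix.mul_apply, Matrix.one_apply]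

theorem exists_diagonalization_of_separable_charpoly {k n : Type*} [Field k] [IsAlgClosed k]
    [Fintype n] [DecidableEq n] (Z : Matrix n n k) (hZ : Z.charpoly.Separable) :
    ∃ (s : (Matrix n n k)ˣ) (ν : n → k),
      Z = (s : Matrix n n k) * diagonal ν * ((s⁻¹ : (Matrix n n k)ˣ) : Matrix n n k) := by
  classical
  have hcard := Polynomial.card_rootSet_eq_natDegree (K := k) hZ (IsAlgClosed.splits _)
  rw [Matrix.charpoly_natDegree_eq_dim] at hcard
  let ν' := Fintype.equivOfCardEq hcard.symm
  let ν : n → k := fun i => (ν' i : k)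
  have hν : Function.Injective ν := Subtype.val_injective.comp ν'.injective
  have hev : ∀ i, Module.End.HasEigenvalue (Matrix.toLin' Z) (ν i) := by
    intro i
    rw [Module.End.hasEigenvalue_iff_isRoot_charpoly, Matrix.charpoly_toLin']
    have := (Polynomial.mem_rootSet.1 (ν' i).2).2
    simpa [Polynomial.IsRoot, Polynomial.aeval_def] using this
  choose v hv using fun i => (hev i).exists_hasEigenvector
  have hli := Module.End.eigenvectors_linearIndependent' _ ν hν v hv
  let s : Matrix n n k := Matrix.of fun i j => v j i
  have hs : IsUnit s := Matrix.linearIndependent_cols_iff_isUnit.1 hli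
  obtain ⟨u, hu⟩ := hs
  refine ⟨u, ν, ?_⟩
  have : Z * s = s * diagonal ν := by
    ext i j
    have := congrFun (hv j).apply_eq_smul i
    rw [Matrix.mul_diagonal]
    simp only [Matrix.toLin'_apply, Pi.smul_apply, smul_eq_mul] at this
    rw [mul_comm]
    exact this
  rw [hu, ← this, Matrix.mul_assoc, ← hu, Units.mul_inv, Matrix.mul_one]

theorem exists_rank_factorization_s14 {k m n : Type*} [Field k] [Fintype m] [DecidableEq m] [Fintype n]
    [DecidableEq n] {r : ℕ} (x : Matrix m n k) (hx : x.rank = r) :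
    ∃ (A : Matrix m (Fin r) k) (B : Matrix (Fin r) n k) (A' : Matrix (Fin r) m k)
      (C : Matrix n (Fin r) k), x = A * B ∧ A' * A = 1 ∧ B * C = 1 := by
  let b := Module.finBasisOfFinrankEq k (LinearMap.range x.mulVecLin) hx
  let A : Matrix m (Fin r) k := Matrix.of fun i j => (b j : m → k) i
  have hA : Function.Injective A.mulVec := by
    rw [Matrix.mulVec_injective_iff]
    exact b.linearIndependent.map' (LinearMap.range x.mulVecLin).subtype (Submodule.ker_subtype _)
  obtain ⟨f, hf⟩ := (Matrix.toLin' A).exists_leftInverse_of_injective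
    (LinearMap.ker_eq_bot.2 hA)
  have hA' : LinearMap.toMatrix' f * A = 1 := by
    have := congrArg LinearMap.toMatrix' hf
    rwa [LinearMap.toMatrix'_comp, LinearMap.toMatrix'_toLin', LinearMap.toMatrix'_id] at this
  choose c hc using fun j => (b j).2
  let C : Matrix n (Fin r) k := Matrix.of fun i j => c j i
  have hxC : x * C = A := by
    ext i j
    exact congrFun (hc j) i
  let B : Matrix (Fin r) n k := Matrix.of fun i j =>
    b.repr ⟨x *ᵥ Pi.single j 1, LinearMap.mem_range_self x.mulVecLin _⟩ i
  have hxAB : x = A * B := by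
    ext i j
    have h := b.sum_repr ⟨x *ᵥ Pi.single j 1, LinearMap.mem_range_self x.mulVecLin _⟩
    have h' := congrFun (congrArg Subtype.val h) i
    simp only [Submodule.coe_sum, Submodule.coe_smul, Finset.sum_apply, Pi.smul_apply,
      smul_eq_mul] at h'
    simp only [Matrix.mul_apply, A, B, Matrix.of_apply]
    rw [Finset.sum_congr rfl fun a _ => mul_comm _ _, h']
    simp
  refine ⟨A, B, LinearMap.toMatrix' f, C, hxAB, hA', ?_⟩
  calc B * C = LinearMap.toMatrix' f * A * (B * C) := by rw [hA', Matrix.one_mul]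
    _ = LinearMap.toMatrix' f * (x * C) := by rw [hxAB]; simp only [Matrix.mul_assoc]
    _ = 1 := by rw [hxC, hA']

/-- The union of the `GL_N`-conjugates of the diagonal matrices `diag(μ, 0, -μ)`. -/
def toralConjugates (k : Type*) [Field k] (N r : ℕ) : Set (Matrix (Fin N) (Fin N) k) :=
  {M | ∃ g : (Matrix (Fin N) (Fin N) k)ˣ, ∃ μ : Fin r → k,
    M = (g : Matrix (Fin N) (Fin N) k) * Matrix.diagonal (dvec N r μ) *
      ((g⁻¹ : (Matrix (Fin N) (Fin N) k)ˣ) : Matrix (Fin N) (Fin N) k)}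

/-- The positions of the entries `μ` and `-μ` in `dvec N r μ`. -/
def outerEmb {N r : ℕ} (h2r : 2 * r ≤ N) : Fin r ⊕ Fin r ↪ Fin N where
  toFun := Sum.elim (fun i => ⟨i, by omega⟩) (fun i => ⟨N - 1 - i, by omega⟩)
  inj' := by
    rintro (i | i) (j | j) h <;> simp only [Sum.elim_inl, Sum.elim_inr, Fin.mk.injEq] at h
    · exact congrArg _ (Fin.ext h)
    · omega
    · omega
    · exact congrArg _ (Fin.ext (by omega))

theorem outerEmb_inl {N r : ℕ} (h2r : 2 * r ≤ N) (i : Fin r) :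
    (outerEmb h2r (Sum.inl i) : ℕ) = i := rfl

theorem outerEmb_inr {N r : ℕ} (h2r : 2 * r ≤ N) (i : Fin r) :
    (outerEmb h2r (Sum.inr i) : ℕ) = N - 1 - i := rfl

theorem dvec_outerEmb {k : Type*} [Field k] {N r : ℕ} (h2r : 2 * r ≤ N) (μ : Fin r → k)
    (a : Fin r ⊕ Fin r) : dvec N r μ (outerEmb h2r a) = Sum.elim μ (-μ) a := by
  rcases a with i | i
  · simp [dvec, outerEmb_inl]
  · have h1 : ¬ N - 1 - (i : ℕ) < r := by omega
    have h2 : N - 1 - (N - 1 - (i : ℕ)) = i := by omega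
    simp [dvec, outerEmb_inr, h1, h2]

theorem dvec_eq_zero_of_notMem_range {k : Type*} [Field k] {N r : ℕ} (h2r : 2 * r ≤ N)
    (μ : Fin r → k) {a : Fin N} (ha : a ∉ Set.range (outerEmb h2r)) : dvec N r μ a = 0 := by
  unfold dvec
  split_ifs with h1 h2
  · exact absurd ⟨Sum.inl ⟨a, h1⟩, rfl⟩ ha
  · refine absurd ⟨Sum.inr ⟨N - 1 - a, h2⟩, Fin.ext ?_⟩ ha
    rw [outerEmb_inr]
    simp only
    omega
  · rfl

theorem mul_diagonal_dvec_mul {k : Type*} [Field k] {N r : ℕ} (h2r : 2 * r ≤ N) (μ : Fin r → k)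
    (g h : Matrix (Fin N) (Fin N) k) :
    g * diagonal (dvec N r μ) * h = g.submatrix id (outerEmb h2r) *
      diagonal (Sum.elim μ (-μ)) * h.submatrix (outerEmb h2r) id := by
  ext i j
  rw [Matrix.mul_apply, Matrix.mul_apply]
  simp only [Matrix.mul_diagonal, Matrix.submatrix_apply, id]
  simp only [← dvec_outerEmb h2r]
  symm
  refine Fintype.sum_of_injective (outerEmb h2r) (outerEmb h2r).injective _ _ ?_ fun _ => rfl
  intro a ha
  rw [dvec_eq_zero_of_notMem_range h2r μ ha]
  ring

theorem mem_jordanOrbit_twoOneLam_iff {k : Type*} [Field k] {N r : ℕ} (h2r : 2 * r ≤ N)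
    (x : Matrix (Fin N) (Fin N) k) :
    x ∈ jordanOrbit k N (twoOneLam N r) ↔ x.rank = r ∧ x * x = 0 := by
  have h1 : ∑ l, (twoOneLam N r l - 1) = r := by
    have : ∀ l : Fin (N - r), twoOneLam N r l - 1 = if (l : ℕ) < r then 1 else 0 := by
      intro l; unfold twoOneLam; split_ifs <;> rfl
    simp only [this]
    rw [Fin.sum_univ_eq_sum_range (fun l => if l < r then 1 else 0) (N - r),
      Finset.sum_ite, Finset.sum_const_zero, add_zero, Finset.sum_const, smul_eq_mul, mul_one]
    have : (Finset.range (N - r)).filter (· < r) = Finset.range r := by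
      ext a; simp only [Finset.mem_filter, Finset.mem_range]; omega
    rw [this, Finset.card_range]
  have h2 : ∀ i, 2 ≤ i → ∑ l, (twoOneLam N r l - i) = 0 := by
    intro i hi
    refine Finset.sum_eq_zero fun l _ => ?_
    unfold twoOneLam; split_ifs <;> omega
  constructor
  · intro hx
    refine ⟨by simpa [h1] using hx 1 le_rfl, ?_⟩
    have := hx 2 (by norm_num)
    rw [h2 2 le_rfl, Matrix.rank, Submodule.finrank_eq_zero, LinearMap.range_eq_bot] at this
    rw [← pow_two]
    exact (map_eq_zero_iff Matrix.toLin' Matrix.toLin'.injective).1 this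
  · rintro ⟨hr, hx⟩ i hi
    rcases eq_or_lt_of_le hi with rfl | hi
    · rw [pow_one, hr, h1]
    · obtain ⟨j, rfl⟩ := Nat.exists_eq_add_of_le (show 2 ≤ i from hi)
      rw [h2 _ (by omega), pow_add, pow_two, hx, Matrix.zero_mul, Matrix.rank_zero]

theorem mul_mem_jordanOrbit {k : Type*} [Field k] {N r : ℕ} (h2r : 2 * r ≤ N)
    {A C : Matrix (Fin N) (Fin r) k} {B A' : Matrix (Fin r) (Fin N) k} (hBA : B * A = 0)
    (hA : A' * A = 1) (hB : B * C = 1) : A * B ∈ jordanOrbit k N (twoOneLam N r) := by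
  rw [mem_jordanOrbit_twoOneLam_iff h2r]
  refine ⟨le_antisymm ?_ ?_, ?_⟩
  · simpa using (Matrix.rank_mul_le_left A B).trans A.rank_le_card_width
  · have h : A' * (A * B) * C = 1 := by
      rw [← Matrix.mul_assoc, hA, Matrix.one_mul, hB]
    calc r = (A' * (A * B) * C).rank := by rw [h, Matrix.rank_one, Fintype.card_fin]
      _ ≤ (A' * (A * B)).rank := Matrix.rank_mul_le_left _ _
      _ ≤ (A * B).rank := Matrix.rank_mul_le_right _ _
  · rw [Matrix.mul_assoc, ← Matrix.mul_assoc B, hBA, Matrix.zero_mul, Matrix.mul_zero]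

theorem toralConjugates_subset {k : Type*} [Field k] [CharZero k] {N r : ℕ} (h2r : 2 * r ≤ N) :
    toralConjugates k N r ⊆ Set.image2 (· + ·) (jordanOrbit k N (twoOneLam N r))
      (jordanOrbit k N (twoOneLam N r)) := by
  rintro _ ⟨g, μ, rfl⟩
  have hinv : ∀ a b : Fin r ⊕ Fin r,
      ∑ i, ((g⁻¹ : (Matrix (Fin N) (Fin N) k)ˣ) : Matrix (Fin N) (Fin N) k) (outerEmb h2r a) i *
        (g : Matrix (Fin N) (Fin N) k) i (outerEmb h2r b) = if a = b then 1 else 0 := by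
    intro a b
    rw [← Matrix.mul_apply, Units.inv_mul, Matrix.one_apply]
    simp
  rw [mul_diagonal_dvec_mul h2r]
  set U := (g : Matrix (Fin N) (Fin N) k).submatrix id (outerEmb h2r)
  set V := ((g⁻¹ : (Matrix (Fin N) (Fin N) k)ˣ) : Matrix (Fin N) (Fin N) k).submatrix
    (outerEmb h2r) id
  have hVU : V * U = 1 := by
    ext a b
    exact hinv a b
  rw [← U.fromCols_toCols, ← V.fromRows_toRows] at hVU ⊢
  generalize U.toCols₁ = A₀ at *
  generalize U.toCols₂ = A₁ at *
  generalize V.toRows₁ = B₀ at *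
  generalize V.toRows₂ = B₁ at *
  rw [Matrix.fromRows_mul_fromCols, ← Matrix.fromBlocks_one, Matrix.fromBlocks_inj] at hVU
  obtain ⟨h00, h01, h10, h11⟩ := hVU
  have hdiag : fromCols A₀ A₁ * diagonal (Sum.elim μ (-μ)) * fromRows B₀ B₁ =
      A₀ * diagonal μ * B₀ - A₁ * diagonal μ * B₁ := by
    rw [← Matrix.fromBlocks_diagonal, Matrix.fromCols_mul_fromBlocks, Matrix.fromCols_mul_fromRows]
    have : diagonal (-μ) = -diagonal μ := (Matrix.diagonal_neg μ).symm
    rw [this]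
    simp only [Matrix.mul_zero, add_zero, zero_add, Matrix.mul_neg, Matrix.neg_mul, sub_eq_add_neg]
  set m : Matrix (Fin r) (Fin r) k := diagonal fun i => μ i / 2 with hm
  have hmm : diagonal μ = m + m := by
    rw [hm, Matrix.diagonal_add]; congr 1; ext i; ring
  rw [hdiag, hmm]
  refine ⟨(A₀ - A₁ * m) * (m * B₀ + B₁), mul_mem_jordanOrbit h2r (A' := B₀) (C := A₁) ?_ ?_ ?_,
    (A₀ + A₁ * m) * (m * B₀ - B₁), mul_mem_jordanOrbit h2r (A' := B₀) (C := -A₁) ?_ ?_ ?_, ?_⟩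
  all_goals
    simp only [Matrix.mul_add, Matrix.add_mul, Matrix.mul_sub, Matrix.sub_mul, Matrix.mul_assoc,
      Matrix.mul_neg, h00, h01, h10, h11, ← Matrix.mul_assoc B₀, ← Matrix.mul_assoc B₁,
      Matrix.mul_one, Matrix.one_mul, Matrix.mul_zero, Matrix.zero_mul]
    try abel

theorem exists_eq_submatrix_mul_adjugate_of_mem_jordanOrbit {k : Type*} [Field k] [IsAlgClosed k]
    {N r : ℕ} (hN : N ≠ 0) (h2r : 2 * r ≤ N) (e : Fin r ⊕ Fin r ↪ Fin N) {lam : Fin r → k}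
    (hlam : ∀ i, lam i ≠ 0) {x : Matrix (Fin N) (Fin N) k}
    (hx : x ∈ jordanOrbit k N (twoOneLam N r)) :
    ∃ g : Matrix (Fin N) (Fin N) k, x = g.submatrix id (e ∘ Sum.inl) *
      (diagonal lam * g.adjugate.submatrix (e ∘ Sum.inr) id) := by
  rw [mem_jordanOrbit_twoOneLam_iff h2r] at hx
  obtain ⟨hrank, hsq⟩ := hx
  obtain ⟨A₁, B, A₁', C, hxAB, hA₁, hBC⟩ := exists_rank_factorization_s14 x hrank
  have hBA₁ : B * A₁ = 0 := by
    calc B * A₁ = A₁' * A₁ * (B * A₁) * (B * C) := by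
          rw [hA₁, hBC, Matrix.one_mul, Matrix.mul_one]
      _ = A₁' * ((A₁ * B) * (A₁ * B)) * C := by simp only [Matrix.mul_assoc]
      _ = 0 := by rw [← hxAB, hsq, Matrix.mul_zero, Matrix.zero_mul]
  set D := diagonal lam with hD
  set D' := diagonal lam⁻¹ with hD'
  have hDD' : D * D' = 1 := by
    rw [hD, hD', Matrix.diagonal_mul_diagonal, ← Matrix.diagonal_one]
    congr 1; ext i; exact mul_inv_cancel₀ (hlam i)
  have hD'D : D' * D = 1 := mul_eq_one_comm.1 hDD'
  have hQP : fromRows (D * A₁' - D * A₁' * C * B) B * fromCols (A₁ * D') C = 1 := by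
    rw [Matrix.fromRows_mul_fromCols, ← Matrix.fromBlocks_one, Matrix.fromBlocks_inj]
    refine ⟨?_, ?_, ?_, hBC⟩
    · rw [Matrix.sub_mul, Matrix.mul_assoc (D * A₁' * C), ← Matrix.mul_assoc B, hBA₁,
        Matrix.zero_mul, Matrix.mul_zero, sub_zero, Matrix.mul_assoc, ← Matrix.mul_assoc A₁', hA₁,
        Matrix.one_mul, hDD']
    · rw [Matrix.sub_mul, Matrix.mul_assoc (D * A₁' * C), hBC, Matrix.mul_one, sub_self]
    · rw [← Matrix.mul_assoc, hBA₁, Matrix.zero_mul]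
  obtain ⟨u, hu, hu'⟩ := exists_unit_extending e _ _ hQP
  obtain ⟨c, hc⟩ := IsAlgClosed.exists_pow_nat_eq (u : Matrix (Fin N) (Fin N) k).det⁻¹
    (Nat.pos_of_ne_zero hN)
  have hdet : (u : Matrix (Fin N) (Fin N) k).det ≠ 0 :=
    ((Matrix.isUnit_iff_isUnit_det _).1 u.isUnit).ne_zero
  have hc0 : c ≠ 0 := by
    rintro rfl
    rw [zero_pow hN] at hc
    exact inv_ne_zero hdet hc.symm
  have hadj : (c • (u : Matrix (Fin N) (Fin N) k)).adjugate =
      c⁻¹ • ((u⁻¹ : (Matrix (Fin N) (Fin N) k)ˣ) : Matrix (Fin N) (Fin N) k) := by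
    have h1 : (c • (u : Matrix (Fin N) (Fin N) k)).adjugate * (c • u) = 1 := by
      rw [Matrix.adjugate_mul, Matrix.det_smul, Fintype.card_fin, hc, inv_mul_cancel₀ hdet,
        one_smul]
    have h2 : (c • (u : Matrix (Fin N) (Fin N) k)) *
        (c⁻¹ • ((u⁻¹ : (Matrix (Fin N) (Fin N) k)ˣ) : Matrix (Fin N) (Fin N) k)) = 1 := by
      rw [Matrix.smul_mul, Matrix.mul_smul, smul_smul, mul_inv_cancel₀ hc0, one_smul, Units.mul_inv]
    exact left_inv_eq_right_inv h1 h2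
  refine ⟨c • u, ?_⟩
  have hA : (c • (u : Matrix (Fin N) (Fin N) k)).submatrix id (e ∘ Sum.inl) = c • (A₁ * D') := by
    ext i j
    have := congrFun (congrFun hu i) (Sum.inl j)
    simp only [Matrix.submatrix_apply, id, Matrix.fromCols_apply_inl] at this
    simp [this]
  have hB : (c⁻¹ • ((u⁻¹ : (Matrix (Fin N) (Fin N) k)ˣ) : Matrix (Fin N) (Fin N) k)).submatrix
      (e ∘ Sum.inr) id = c⁻¹ • B := by
    ext i j
    have := congrFun (congrFun hu' (Sum.inr i)) j
    simp only [Matrix.submatrix_apply, id, Matrix.fromRows_apply_inr] at this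
    simp only [Matrix.submatrix_apply, Matrix.smul_apply, Function.comp, id, this]
  rw [hadj, hA, hB, Matrix.mul_smul, Matrix.mul_smul, Matrix.smul_mul, smul_smul,
    inv_mul_cancel₀ hc0, one_smul, Matrix.mul_assoc, ← Matrix.mul_assoc D', hD'D, Matrix.one_mul,
    hxAB]

theorem mul_add_mul_mem_toralConjugates {k : Type*} [Field k] [IsAlgClosed k] [CharZero k]
    {N r : ℕ} (h2r : 2 * r ≤ N) {A C : Matrix (Fin N) (Fin r) k} {B E : Matrix (Fin r) (Fin N) k}
    (hBA : B * A = 0) (hEC : E * C = 0) (hdet : (B * C * (E * A)).det ≠ 0)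
    (hsep : (B * C * (E * A)).charpoly.Separable) :
    A * B + C * E ∈ toralConjugates k N r := by
  obtain ⟨s, ν, hZ⟩ := exists_diagonalization_of_separable_charpoly _ hsep
  choose μ hμ using fun i => IsAlgClosed.exists_pow_nat_eq (ν i) (n := 2) two_pos
  have hν : ∀ i, ν i ≠ 0 := by
    intro i hi
    apply hdet
    rw [hZ, Matrix.det_mul, Matrix.det_mul, Matrix.det_diagonal,
      Finset.prod_eq_zero (Finset.mem_univ i) hi, mul_zero, zero_mul]
  have hμ0 : ∀ i, μ i ≠ 0 := fun i hi => hν i (by rw [← hμ, hi]; norm_num)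
  set M := B * C
  set M' := E * A
  set S : Matrix (Fin r) (Fin r) k := s.val
  set S' : Matrix (Fin r) (Fin r) k := s⁻¹.val
  have hSS' : S * S' = 1 := s.mul_inv
  have hS'S : S' * S = 1 := s.inv_mul
  set D : Matrix (Fin r) (Fin r) k := diagonal μ with hD
  set D' : Matrix (Fin r) (Fin r) k := diagonal fun i => (μ i)⁻¹ with hD'
  have hDD' : D * D' = 1 := by
    rw [hD, hD', Matrix.diagonal_mul_diagonal, ← Matrix.diagonal_one]
    congr 1; ext i; exact mul_inv_cancel₀ (hμ0 i)
  have hD'D : D' * D = 1 := mul_eq_one_comm.1 hDD'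
  have hνD : diagonal ν = D * D := by
    rw [hD, Matrix.diagonal_mul_diagonal]
    congr 1; ext i; rw [← hμ, pow_two]
  rw [hνD] at hZ
  have hinv : M' * S * D' * D' * S' * M = 1 := by
    have h : M * (M' * S * D' * D' * S') = 1 := by
      calc M * (M' * S * D' * D' * S') = (M * M') * S * D' * D' * S' := by
            simp only [Matrix.mul_assoc]
        _ = S * D * (D * (S' * S) * D') * D' * S' := by rw [hZ]; simp only [Matrix.mul_assoc]
        _ = S * D * 1 * D' * S' := by rw [hS'S, Matrix.mul_one, hDD']
        _ = 1 := by rw [Matrix.mul_one, Matrix.mul_assoc S, hDD', Matrix.mul_one, hSS']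
    exact mul_eq_one_comm.1 h
  have hdiag : S' * (M * M') * S = D * D := by
    rw [hZ]
    calc S' * (S * (D * D) * S') * S = (S' * S) * (D * D) * (S' * S) := by
          simp only [Matrix.mul_assoc]
      _ = D * D := by rw [hS'S, Matrix.one_mul, Matrix.mul_one]
  -- eigenvectors of `A * B + C * E` for the eigenvalues `±μ`, on both sides
  let Up := A * S + C * M' * S * D'
  let Un := A * S - C * M' * S * D'
  let Vp := (2 : k)⁻¹ • (D' * (S' * B + D' * S' * M * E))
  let Vn := (2 : k)⁻¹ • (D' * (D' * S' * M * E - S' * B))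
  have hBU : B * (A * S) = 0 := by rw [← Matrix.mul_assoc, hBA, Matrix.zero_mul]
  have hEU : E * (C * M' * S * D') = 0 := by
    simp only [Matrix.mul_assoc]
    rw [← Matrix.mul_assoc, hEC, Matrix.zero_mul]
  have h1 : S' * B * (C * M' * S * D') = D := by
    calc S' * B * (C * M' * S * D') = S' * (M * M') * S * D' := by
          simp only [M, Matrix.mul_assoc]
      _ = D := by rw [hdiag, Matrix.mul_assoc, hDD', Matrix.mul_one]
  have h2 : D' * S' * M * E * (A * S) = D := by
    calc D' * S' * M * E * (A * S) = D' * (S' * (M * M') * S) := by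
          simp only [M', Matrix.mul_assoc]
      _ = D := by rw [hdiag, ← Matrix.mul_assoc, hD'D, Matrix.one_mul]
  have h3 : S' * B * (A * S) = 0 := by rw [Matrix.mul_assoc, hBU, Matrix.mul_zero]
  have h4 : D' * S' * M * E * (C * M' * S * D') = 0 := by
    rw [Matrix.mul_assoc, hEU, Matrix.mul_zero]
  have hhalf : ∀ X : Matrix (Fin r) (Fin r) k, (2 : k)⁻¹ • (X + X) = X := fun X => by
    rw [← two_smul k X, smul_smul, inv_mul_cancel₀ two_ne_zero, one_smul]
  have hVU : fromRows Vp Vn * fromCols Up Un = 1 := by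
    rw [Matrix.fromRows_mul_fromCols, ← Matrix.fromBlocks_one, Matrix.fromBlocks_inj]
    simp only [Up, Un, Vp, Vn, Matrix.smul_mul, Matrix.mul_assoc D' (_ + _),
      Matrix.mul_assoc D' (_ - _)]
    simp only [Matrix.add_mul, Matrix.sub_mul, Matrix.mul_add, Matrix.mul_sub, h1, h2, h3, h4, hD'D,
      Matrix.mul_zero]
    refine ⟨?_, ?_, ?_, ?_⟩ <;> simp [hhalf]
  obtain ⟨g, hg, hg'⟩ := exists_unit_extending (outerEmb h2r) _ _ hVU
  refine ⟨g, μ, ?_⟩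
  rw [mul_diagonal_dvec_mul h2r, hg, hg', ← Matrix.fromBlocks_diagonal,
    Matrix.fromCols_mul_fromBlocks, Matrix.fromCols_mul_fromRows]
  have hneg : diagonal (-μ) = -D := (Matrix.diagonal_neg μ).symm
  rw [hneg, ← hD]
  have hcancel : ∀ X : Matrix (Fin r) (Fin N) k, D * (D' * X) = X := fun X => by
    rw [← Matrix.mul_assoc, hDD', Matrix.one_mul]
  have h5 : A * S * (S' * B) = A * B := by
    rw [Matrix.mul_assoc, ← Matrix.mul_assoc S, hSS', Matrix.one_mul]
  have h6 : C * M' * S * D' * (D' * S' * M * E) = C * E := by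
    calc C * M' * S * D' * (D' * S' * M * E) = C * (M' * S * D' * D' * S' * M) * E := by
          simp only [Matrix.mul_assoc]
      _ = C * E := by rw [hinv, Matrix.mul_one]
  simp only [Matrix.mul_zero, add_zero, zero_add, Matrix.mul_neg, Matrix.neg_mul]
  have h7 : Up * D * Vp = (2 : k)⁻¹ • (Up * (S' * B + D' * S' * M * E)) := by
    simp only [Vp, Matrix.mul_smul, Matrix.mul_assoc Up, hcancel]
  have h8 : Un * D * Vn = (2 : k)⁻¹ • (Un * (D' * S' * M * E - S' * B)) := by
    simp only [Vn, Matrix.mul_smul, Matrix.mul_assoc Un, hcancel]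
  rw [h7, h8, ← sub_eq_add_neg, ← smul_sub]
  have h9 : Up * (S' * B + D' * S' * M * E) - Un * (D' * S' * M * E - S' * B) =
      (2 : k) • (A * B + C * E) := by
    simp only [Up, Un, Matrix.add_mul, Matrix.sub_mul, Matrix.mul_add, Matrix.mul_sub, h5, h6,
      two_smul]
    abel
  rw [h9, smul_smul, inv_mul_cancel₀ two_ne_zero, one_smul]

theorem zClosure_mono {k : Type*} [CommRing k] {N : ℕ} {S T : Set (Matrix (Fin N) (Fin N) k)}
    (h : S ⊆ T) : zClosure S ⊆ zClosure T :=
  fun _ hM P hP => hM P fun x hx => hP x (h hx)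

theorem zClosure_subset_zClosure_s14 {k : Type*} [CommRing k] {N : ℕ}
    {S T : Set (Matrix (Fin N) (Fin N) k)} (h : S ⊆ zClosure T) : zClosure S ⊆ zClosure T :=
  fun _ hM P hP => hM P fun _ hx => h hx P hP

open Polynomial in
/-- A polynomial curve of matrices which meets `S` wherever the nonzero polynomial `d` does not
vanish lies in the Zariski closure of `S`. -/
theorem map_eval_mem_zClosure {k : Type*} [Field k] [Infinite k] {N : ℕ}
    {S : Set (Matrix (Fin N) (Fin N) k)} (T : Matrix (Fin N) (Fin N) k[X]) {d : k[X]} (hd : d ≠ 0)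
    (hS : ∀ t, d.eval t ≠ 0 → T.map (evalRingHom t) ∈ S) (t : k) :
    T.map (evalRingHom t) ∈ zClosure S := by
  intro P hP
  let p : k[X] := MvPolynomial.eval₂ C (fun q => T q.1 q.2) P
  have hp : ∀ t, p.eval t = MvPolynomial.eval (fun q => T.map (evalRingHom t) q.1 q.2) P := by
    intro t
    have h := MvPolynomial.eval₂_comp_left (evalRingHom t) C (fun q : Fin N × Fin N => T q.1 q.2) P
    have hC : (evalRingHom t).comp C = RingHom.id k := by ext; simp
    rw [hC] at h
    exact h
  have hpd : p * d = 0 := by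
    refine Polynomial.funext fun t => ?_
    rw [eval_mul, eval_zero]
    by_cases ht : d.eval t = 0
    · rw [ht, mul_zero]
    · rw [hp, hP _ (hS t ht), zero_mul]
  rw [← hp, (mul_eq_zero.1 hpd).resolve_right hd, eval_zero]

open Polynomial in
theorem separable_iff_resultant_derivative_ne_zero {k : Type*} [Field k] [CharZero k] {f : k[X]}
    (hf : f ≠ 0) {r : ℕ} (hr : f.natDegree = r) :
    f.Separable ↔ resultant f (derivative f) r (r - 1) ≠ 0 := by
  have h : resultant f (derivative f) r (r - 1) = resultant f (derivative f) := by
    rw [natDegree_derivative, hr]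
  rw [h, Ne, resultant_eq_zero_iff, Polynomial.Separable]
  simp [hf]

open Polynomial in
theorem map_eval_mem_zClosure_toralConjugates {k : Type*} [Field k] [IsAlgClosed k] [CharZero k]
    {N r : ℕ} (h2r : 2 * r ≤ N) {A C : Matrix (Fin N) (Fin r) k[X]}
    {B E : Matrix (Fin r) (Fin N) k[X]} (hBA : B * A = 0) (hEC : E * C = 0) {lam : Fin r → k}
    (hlam : Function.Injective lam) (hlam0 : ∀ i, lam i ≠ 0)
    (h0 : (B * C * (E * A)).map (evalRingHom 0) = diagonal lam) (t : k) :
    (A * B + C * E).map (evalRingHom t) ∈ zClosure (toralConjugates k N r) := by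
  let Z := B * C * (E * A)
  let f := Z.charpoly
  let d := Z.det * resultant f (derivative f) r (r - 1)
  have hdet : ∀ t, (Z.map (evalRingHom t)).det = Z.det.eval t := fun t =>
    ((evalRingHom t).map_det Z).symm
  have hres : ∀ t, (Z.map (evalRingHom t)).charpoly.Separable ↔
      (resultant f (derivative f) r (r - 1)).eval t ≠ 0 := by
    intro t
    rw [separable_iff_resultant_derivative_ne_zero (Matrix.charpoly_monic _).ne_zero
      ((Matrix.charpoly_natDegree_eq_dim _).trans (Fintype.card_fin r)), Matrix.charpoly_map,
      derivative_map, resultant_map_map]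
    rfl
  have hd : d ≠ 0 := by
    intro hd
    have h : d.eval 0 = 0 := by rw [hd, eval_zero]
    rw [eval_mul, mul_eq_zero, ← hdet, h0, Matrix.det_diagonal] at h
    rcases h with h | h
    · exact Finset.prod_ne_zero_iff.2 (fun i _ => hlam0 i) h
    · refine (hres 0).1 ?_ h
      rw [h0, Matrix.charpoly_diagonal]
      exact separable_prod_X_sub_C_iff.2 hlam
  refine map_eval_mem_zClosure _ hd (fun t ht => ?_) t
  rw [eval_mul, mul_ne_zero_iff, ← hdet, ← hres] at ht
  have hZ : Z.map (evalRingHom t) = B.map (evalRingHom t) * C.map (evalRingHom t) *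
      (E.map (evalRingHom t) * A.map (evalRingHom t)) := by
    simp only [Z, Matrix.map_mul]
  rw [hZ] at ht
  rw [Matrix.map_add _ (map_add _), Matrix.map_mul, Matrix.map_mul]
  refine mul_add_mul_mem_toralConjugates h2r ?_ ?_ ht.1 ht.2
  · rw [← Matrix.map_mul, hBA, Matrix.map_zero _ (map_zero _)]
  · rw [← Matrix.map_mul, hEC, Matrix.map_zero _ (map_zero _)]

theorem diagonal_mul_adjugate_submatrix_mul_submatrix {R : Type*} [CommRing R] {N r : ℕ}
    (G : Matrix (Fin N) (Fin N) R) (lam : Fin r → R) {a b : Fin r → Fin N} (h : ∀ i j, a i ≠ b j) :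
    diagonal lam * G.adjugate.submatrix a id * G.submatrix id b = 0 := by
  have : G.adjugate.submatrix a id * G.submatrix id b = (G.adjugate * G).submatrix a b := by
    ext i j; simp [Matrix.mul_apply]
  rw [Matrix.mul_assoc, this, Matrix.adjugate_mul]
  ext i j
  simp [Matrix.diagonal_mul, h i j]

open Polynomial in
theorem add_mem_zClosure_toralConjugates {k : Type*} [Field k] [IsAlgClosed k] [CharZero k]
    {N r : ℕ} (hr : 1 ≤ r) (h2r : 2 * r ≤ N) {x y : Matrix (Fin N) (Fin N) k}
    (hx : x ∈ jordanOrbit k N (twoOneLam N r)) (hy : y ∈ jordanOrbit k N (twoOneLam N r)) :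
    x + y ∈ zClosure (toralConjugates k N r) := by
  let e := outerEmb h2r
  let e' : Fin r ⊕ Fin r ↪ Fin N := (Equiv.sumComm _ _).toEmbedding.trans e
  let lam : Fin r → k := fun i => ((i : ℕ) + 1 : k)
  have hlam0 : ∀ i, lam i ≠ 0 := fun i => Nat.cast_add_one_ne_zero _
  have hlam : Function.Injective lam := fun i j hij =>
    Fin.ext (Nat.cast_injective (R := k) (add_right_cancel hij))
  obtain ⟨g, hg⟩ := exists_eq_submatrix_mul_adjugate_of_mem_jordanOrbit (by omega) h2r e hlam0 hx
  obtain ⟨h, hh⟩ := exists_eq_submatrix_mul_adjugate_of_mem_jordanOrbit (by omega) h2r e'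
    (lam := fun _ => 1) (fun _ => one_ne_zero) hy
  -- the segment from the identity to `m`
  let seg : Matrix (Fin N) (Fin N) k → Matrix (Fin N) (Fin N) k[X] := fun m =>
    1 + (X : k[X]) • (m - 1).map C
  have hseg0 : ∀ m, (seg m).map (evalRingHom 0) = 1 := by
    intro m
    ext i j
    rcases eq_or_ne i j with rfl | hij
    · simp [seg]
    · simp [seg, hij]
  have hseg1 : ∀ m, (seg m).map (evalRingHom 1) = m := by
    intro m
    ext i j
    rcases eq_or_ne i j with rfl | hij
    · simp [seg]
    · simp [seg, hij]
  have hadj : ∀ m t, (seg m).adjugate.map (evalRingHom t) =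
      ((seg m).map (evalRingHom t)).adjugate := fun m t => (evalRingHom t).map_adjugate (seg m)
  let A := (seg g).submatrix id (e ∘ Sum.inl)
  let B := diagonal (fun i => C (lam i)) * (seg g).adjugate.submatrix (e ∘ Sum.inr) id
  let A₂ := (seg h).submatrix id (e ∘ Sum.inr)
  let B₂ := diagonal (fun _ : Fin r => C (1 : k)) * (seg h).adjugate.submatrix (e ∘ Sum.inl) id
  have hA : ∀ t, A.map (evalRingHom t) =
      ((seg g).map (evalRingHom t)).submatrix id (e ∘ Sum.inl) := fun t => rfl
  have hA₂ : ∀ t, A₂.map (evalRingHom t) =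
      ((seg h).map (evalRingHom t)).submatrix id (e ∘ Sum.inr) := fun t => rfl
  have hdiag : ∀ (t : k) (c : Fin r → k),
      (diagonal fun i => C (c i)).map (evalRingHom t) = diagonal c := by
    intro t c
    rw [Matrix.diagonal_map (map_zero _)]
    congr 1; ext i; simp
  have hB : ∀ t, B.map (evalRingHom t) = diagonal lam *
      ((seg g).map (evalRingHom t)).adjugate.submatrix (e ∘ Sum.inr) id := by
    intro t
    rw [Matrix.map_mul, hdiag, ← hadj]; rfl
  have hB₂ : ∀ t, B₂.map (evalRingHom t) = diagonal (fun _ : Fin r => (1 : k)) *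
      ((seg h).map (evalRingHom t)).adjugate.submatrix (e ∘ Sum.inl) id := by
    intro t
    rw [Matrix.map_mul, hdiag t fun _ => 1, ← hadj]; rfl
  have hBA : B * A = 0 := diagonal_mul_adjugate_submatrix_mul_submatrix _ _ fun i j hij => by
    simpa using e.injective hij
  have hBA₂ : B₂ * A₂ = 0 := diagonal_mul_adjugate_submatrix_mul_submatrix _ _ fun i j hij => by
    simpa using e.injective hij
  have hone : ∀ s : Fin r → Fin r ⊕ Fin r, Function.Injective s →
      (1 : Matrix (Fin N) (Fin N) k).submatrix (e ∘ s) id *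
        (1 : Matrix (Fin N) (Fin N) k).submatrix id (e ∘ s) = 1 := by
    intro s hs
    ext i j
    simp [Matrix.mul_apply, Matrix.one_apply, hs.eq_iff]
  have h0 : (B * A₂ * (B₂ * A)).map (evalRingHom 0) = diagonal lam := by
    simp only [Matrix.map_mul, hA, hB, hA₂, hB₂, hseg0, Matrix.adjugate_one, Matrix.mul_assoc]
    rw [hone _ Sum.inl_injective, ← Matrix.mul_assoc (submatrix _ _ _),
      hone _ Sum.inr_injective]
    simp
  have key := map_eval_mem_zClosure_toralConjugates h2r hBA hBA₂ hlam hlam0 h0 1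
  rw [Matrix.map_add _ (map_add _), Matrix.map_mul, hA, hB, Matrix.map_mul, hA₂, hB₂, hseg1,
    hseg1] at key
  rw [hg, hh]
  exact key

/-- For `λ = (2^r, 1^{N−2r})`, the conical secant variety of `O_λ` is the closure of the
union of the `GL_N`-conjugates of the `r`-dimensional toral subspace
`{diag(μ₁, …, μ_r, 0, …, 0, −μ_r, …, −μ₁)}`. -/
theorem stmt14 {k : Type*} [Field k] [IsAlgClosed k] [CharZero k]
    {N r : ℕ} (hr : 1 ≤ r) (h2r : 2 * r ≤ N) :
    zClosure (Set.image2 (· + ·) (jordanOrbit k N (twoOneLam N r))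
        (jordanOrbit k N (twoOneLam N r)))
      = zClosure {M : Matrix (Fin N) (Fin N) k |
          ∃ g : (Matrix (Fin N) (Fin N) k)ˣ, ∃ μ : Fin r → k,
            M = (g : Matrix (Fin N) (Fin N) k) * Matrix.diagonal (dvec N r μ) *
              ((g⁻¹ : (Matrix (Fin N) (Fin N) k)ˣ) : Matrix (Fin N) (Fin N) k)} := by
  refine Set.Subset.antisymm (zClosure_subset_zClosure_s14 ?_)
    (zClosure_mono (toralConjugates_subset h2r))
  rintro _ ⟨x, hx, y, hy, rfl⟩
  exact add_mem_zClosure_toralConjugates hr h2r hx hy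
end
end

section
/- Let k be an algebraically closed field of characteristic 0 and r ≥ 1. Then the Zariski closure in Mat_{2n}(k) of the set {x₁ + x₂ + … + x_r : each x_i ∈ sp_{2n}(k) with rank(x_i) ≤ 1} equals {M ∈ sp_{2n}(k) : rank(M) ≤ r}. (Equivalently: the affine cone over the r-th secant variety of the projectivized minimal nilpotent orbit of sp_{2n} is the set of symplectic matrices of rank at most r.) -/
open Matrix

noncomputable section

/-- The standard symplectic form matrix `J = [[0, I_n], [−I_n, 0]]`. -/
def Jmat (k : Type*) [CommRing k] (n : ℕ) : Matrix (Fin (2 * n)) (Fin (2 * n)) k :=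
  Matrix.of fun i j =>
    if (i : ℕ) + n = (j : ℕ) then 1 else if (j : ℕ) + n = (i : ℕ) then -1 else 0

/-- The symplectic Lie algebra `sp_{2n}(k) = {M : Mᵀ J + J M = 0}`. -/
def spSet (k : Type*) [CommRing k] (n : ℕ) : Set (Matrix (Fin (2 * n)) (Fin (2 * n)) k) :=
  {M | Mᵀ * Jmat k n + Jmat k n * M = 0}

/-- The generic matrix, whose entries are the coordinate functions on `Mat_N`. -/
def genericMatrix (k : Type*) [CommRing k] (N : ℕ) :
    Matrix (Fin N) (Fin N) (MvPolynomial (Fin N × Fin N) k) :=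
  Matrix.of fun i j => MvPolynomial.X (i, j)

lemma genericMatrix_map_eval {k : Type*} [CommRing k] {N : ℕ} (M : Matrix (Fin N) (Fin N) k) :
    (genericMatrix k N).map (MvPolynomial.eval fun q => M q.1 q.2) = M := by
  ext i j
  simp [genericMatrix]

lemma map_C_map_eval {k σ m n : Type*} [CommRing k] (f : σ → k) (A : Matrix m n k) :
    (A.map (MvPolynomial.C (σ := σ))).map (MvPolynomial.eval f) = A := by
  ext i j
  simp

lemma subset_zClosure_s19 {k : Type*} [CommRing k] {N : ℕ} (S : Set (Matrix (Fin N) (Fin N) k)) :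
    S ⊆ zClosure S :=
  fun M hM _ hP => hP M hM

lemma zClosure_subset_spSet {k : Type*} [CommRing k] {n : ℕ}
    {S : Set (Matrix (Fin (2 * n)) (Fin (2 * n)) k)} (hS : S ⊆ spSet k n) :
    zClosure S ⊆ spSet k n := by
  have key (M : Matrix (Fin (2 * n)) (Fin (2 * n)) k) (i j : Fin (2 * n)) :
      MvPolynomial.eval (fun q : Fin (2 * n) × Fin (2 * n) => M q.1 q.2)
        (((genericMatrix k (2 * n))ᵀ * (Jmat k n).map (MvPolynomial.C : k →+* _) +
          (Jmat k n).map (MvPolynomial.C : k →+* _) * genericMatrix k (2 * n) :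
            Matrix _ _ (MvPolynomial (Fin (2 * n) × Fin (2 * n)) k)) i j) =
        (Mᵀ * Jmat k n + Jmat k n * M) i j := by
    rw [← Matrix.map_apply
        (f := MvPolynomial.eval fun q : Fin (2 * n) × Fin (2 * n) => M q.1 q.2),
      Matrix.map_add _ (map_add _), Matrix.map_mul, Matrix.map_mul, Matrix.transpose_map,
      genericMatrix_map_eval, map_C_map_eval]
  intro M hM
  ext i j
  rw [← key M i j]
  refine hM _ fun x hx => ?_
  have hx' : xᵀ * Jmat k n + Jmat k n * x = 0 := hS hx
  rw [key x i j, hx', Matrix.zero_apply]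

/-- A matrix of rank at least `d` has an invertible compression of size `d`. -/
lemma exists_mul_mul_eq_one_of_le_rank {k : Type*} [Field k] {m n d : ℕ}
    (M : Matrix (Fin m) (Fin n) k) (hd : d ≤ M.rank) :
    ∃ (A : Matrix (Fin d) (Fin m) k) (B : Matrix (Fin n) (Fin d) k), A * M * B = 1 := by
  have hd' : Module.finrank k (Fin d → k) ≤ Module.finrank k M.mulVecLin.range := by
    simpa [Matrix.rank] using hd
  obtain ⟨f, hf⟩ := finrank_le_iff_exists_linearMap.1 hd'
  obtain ⟨g, hg⟩ := M.mulVecLin.rangeRestrict.exists_rightInverse_of_surjective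
    M.mulVecLin.range_rangeRestrict
  obtain ⟨l, hl⟩ := (M.mulVecLin.range.subtype ∘ₗ f).exists_leftInverse_of_injective
    (LinearMap.ker_eq_bot.2 (M.mulVecLin.range.injective_subtype.comp hf))
  refine ⟨LinearMap.toMatrix' l, LinearMap.toMatrix' (g ∘ₗ f), ?_⟩
  have hM : LinearMap.toMatrix' M.mulVecLin = M := LinearMap.toMatrix'_toLin' M
  suffices LinearMap.toMatrix' l * LinearMap.toMatrix' M.mulVecLin * LinearMap.toMatrix' (g ∘ₗ f)
      = 1 by rwa [hM] at this
  rw [← LinearMap.toMatrix'_comp, ← LinearMap.toMatrix'_comp, ← LinearMap.toMatrix'_id, ← hl]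
  congr 1
  refine LinearMap.ext fun v => ?_
  exact congrArg l (congrArg Subtype.val (LinearMap.congr_fun hg (f v)))

lemma rank_le_of_mem_zClosure {k : Type*} [Field k] {N r : ℕ}
    {S : Set (Matrix (Fin N) (Fin N) k)} (hS : ∀ x ∈ S, x.rank ≤ r)
    {M : Matrix (Fin N) (Fin N) k} (hM : M ∈ zClosure S) : M.rank ≤ r := by
  by_contra! hlt
  obtain ⟨A, B, hAB⟩ := exists_mul_mul_eq_one_of_le_rank M (Nat.succ_le_of_lt hlt)
  have key (x : Matrix (Fin N) (Fin N) k) :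
      MvPolynomial.eval (fun q : Fin N × Fin N => x q.1 q.2)
        (A.map (MvPolynomial.C : k →+* MvPolynomial (Fin N × Fin N) k) * genericMatrix k N *
          B.map (MvPolynomial.C : k →+* MvPolynomial (Fin N × Fin N) k)).det =
        (A * x * B).det := by
    rw [RingHom.map_det, RingHom.mapMatrix_apply, Matrix.map_mul, Matrix.map_mul,
      genericMatrix_map_eval, map_C_map_eval, map_C_map_eval]
  have hdet : (A * M * B).det = 0 := by
    rw [← key M]
    refine hM _ fun x hx => ?_
    rw [key x]
    by_contra hne
    have hrank := rank_of_isUnit (A * x * B)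
      ((Matrix.isUnit_iff_isUnit_det _).2 (isUnit_iff_ne_zero.2 hne))
    have hle := (rank_mul_le_left (A * x) B).trans ((rank_mul_le_right A x).trans (hS x hx))
    rw [hrank, Fintype.card_fin] at hle
    omega
  simp [hAB] at hdet

lemma rank_add_le_rank_add_rank {k m n : Type*} [Field k] [Fintype n] [Fintype m]
    (A B : Matrix m n k) : (A + B).rank ≤ A.rank + B.rank := by
  rw [Matrix.rank, mulVecLin_add]
  exact (Submodule.finrank_mono (LinearMap.range_add_le _ _)).trans
    (Submodule.finrank_add_le_finrank_add_finrank _ _)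

lemma rank_sum_le_card {k ι m n : Type*} [Field k] [Fintype n] [Fintype m]
    (s : Finset ι) (x : ι → Matrix m n k)
    (hx : ∀ i ∈ s, (x i).rank ≤ 1) : (∑ i ∈ s, x i).rank ≤ s.card := by
  classical
  induction s using Finset.induction_on with
  | empty => simp
  | insert a s ha ih =>
    rw [Finset.sum_insert ha, Finset.card_insert_of_notMem ha, add_comm]
    exact (rank_add_le_rank_add_rank _ _).trans (add_le_add
      (ih fun i hi => hx i (Finset.mem_insert_of_mem hi)) (hx a (Finset.mem_insert_self _ _)))

/-- A symmetric matrix of rank at most `r` is a sum of `r` symmetric matrices of rank at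
most one. -/
lemma exists_sum_of_isSymm {k : Type*} [Field k] [CharZero k] {N r : ℕ}
    (S : Matrix (Fin N) (Fin N) k) (hS : S.IsSymm) (hr : S.rank ≤ r) :
    ∃ T : Fin r → Matrix (Fin N) (Fin N) k,
      (∀ i, (T i).IsSymm ∧ (T i).rank ≤ 1) ∧ S = ∑ i, T i := by
  classical
  have : Invertible (2 : k) := invertibleOfNonzero two_ne_zero
  obtain ⟨v', hv'⟩ := LinearMap.BilinForm.exists_orthogonal_basis
    (LinearMap.BilinForm.isSymm_iff.1 (Matrix.isSymm_toBilin'_iff_isSymm.2 hS))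
  obtain ⟨v, hv⟩ : ∃ v : Module.Basis (Fin N) k (Fin N → k),
      ∀ i j, i ≠ j → S.toBilin' (v i) (v j) = 0 := by
    let e : Fin (Module.finrank k (Fin N → k)) ≃ Fin N := finCongr (by simp)
    refine ⟨v'.reindex e, fun i j hij => ?_⟩
    simpa using hv' (e.symm.injective.ne hij)
  let d : Fin N → k := fun i => S.toBilin' (v i) (v i)
  let Q : Matrix (Fin N) (Fin N) k := v.toMatrix (Pi.basisFun k (Fin N))
  have hD : LinearMap.BilinForm.toMatrix v S.toBilin' = diagonal d := by
    ext i j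
    rw [LinearMap.BilinForm.toMatrix_apply]
    by_cases hij : i = j
    · subst hij; simp [d]
    · rw [hv i j hij, diagonal_apply_ne _ hij]
  have hSQ : S = Qᵀ * diagonal d * Q := by
    rw [← hD, LinearMap.BilinForm.toMatrix_mul_basis_toMatrix]
    ext i j
    simp
  have hQ : IsUnit Q.det := by
    rw [← Matrix.isUnit_iff_isUnit_det]
    exact IsUnit.of_mul_eq_one _ (v.toMatrix_mul_toMatrix_flip (Pi.basisFun k (Fin N)))
  have hcard : Fintype.card {i // d i ≠ 0} ≤ Fintype.card (Fin r) := by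
    rw [← rank_diagonal, Fintype.card_fin]
    rwa [hSQ, rank_mul_eq_left_of_isUnit_det _ _ hQ,
      rank_mul_eq_right_of_isUnit_det _ _ (by rwa [det_transpose])] at hr
  obtain ⟨f⟩ := Function.Embedding.nonempty_of_card_le hcard
  let t : Fin N → Matrix (Fin N) (Fin N) k := fun i => vecMulVec (d i • Q i) (Q i)
  have ht (i) : (t i).IsSymm := by
    ext a b
    simp only [t, transpose_apply, vecMulVec_apply, Pi.smul_apply, smul_eq_mul]
    ring
  have hSt : S = ∑ i : {i // d i ≠ 0}, t i := by
    have h0 : S = ∑ i, t i := by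
      rw [hSQ]
      ext a b
      rw [Matrix.sum_apply, Matrix.mul_apply]
      refine Finset.sum_congr rfl fun i _ => ?_
      simp [t, vecMulVec_apply]
      ring
    rw [h0]
    refine (Fintype.sum_of_injective _ Subtype.val_injective _ _ (fun i hi => ?_)
      fun _ => rfl).symm
    have hi' : d i = 0 := by simpa using hi
    simp [t, hi']
  refine ⟨Function.extend f (fun i => t i) 0, fun j => ?_, ?_⟩
  · by_cases hj : ∃ i, f i = j
    · obtain ⟨i, rfl⟩ := hj
      rw [f.injective.extend_apply]
      exact ⟨ht _, rank_vecMulVec_le _ _⟩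
    · rw [Function.extend_apply' _ _ _ hj]
      exact ⟨isSymm_zero, by simp⟩
  · rw [hSt]
    exact Fintype.sum_of_injective f f.injective _ _
      (fun j hj => Function.extend_apply' _ _ _ hj) fun i => by rw [f.injective.extend_apply]

lemma Jmat_transpose (k : Type*) [CommRing k] (n : ℕ) : (Jmat k n)ᵀ = -Jmat k n := by
  ext i j
  have hi := i.isLt
  rw [transpose_apply, Matrix.neg_apply, Jmat, of_apply, of_apply]
  split_ifs <;> first | omega | simp

lemma Jmat_mul_Jmat (k : Type*) [CommRing k] (n : ℕ) : Jmat k n * Jmat k n = -1 := by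
  ext i j
  have hi := i.isLt
  have hj := j.isLt
  rw [Matrix.mul_apply, Finset.sum_eq_single
    (⟨if (i : ℕ) < n then i + n else i - n, by split_ifs <;> omega⟩ : Fin (2 * n))]
  · rw [Matrix.neg_apply, Matrix.one_apply, Jmat, of_apply, of_apply]
    simp only [Fin.ext_iff]
    split_ifs <;> first | omega | simp
  · intro l _ hl
    have hl' := l.isLt
    simp only [Ne, Fin.ext_iff] at hl
    rw [Jmat, of_apply, of_apply]
    split_ifs at hl ⊢ <;> first | omega | simp
  · simp

lemma mem_spSet_iff_isSymm {k : Type*} [CommRing k] {n : ℕ}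
    {M : Matrix (Fin (2 * n)) (Fin (2 * n)) k} : M ∈ spSet k n ↔ (Jmat k n * M).IsSymm := by
  rw [Matrix.IsSymm, transpose_mul, Jmat_transpose, mul_neg, neg_eq_iff_add_eq_zero]
  rfl

lemma sum_mem_spSet {k ι : Type*} [CommRing k] {n : ℕ} (s : Finset ι)
    (x : ι → Matrix (Fin (2 * n)) (Fin (2 * n)) k) (hx : ∀ i ∈ s, x i ∈ spSet k n) :
    ∑ i ∈ s, x i ∈ spSet k n := by
  simp only [mem_spSet_iff_isSymm, Matrix.IsSymm] at hx ⊢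
  rw [Finset.mul_sum, transpose_sum]
  exact Finset.sum_congr rfl hx

lemma exists_sum_of_mem_spSet {k : Type*} [Field k] [CharZero k] {n r : ℕ}
    {M : Matrix (Fin (2 * n)) (Fin (2 * n)) k} (hM : M ∈ spSet k n) (hr : M.rank ≤ r) :
    ∃ x : Fin r → Matrix (Fin (2 * n)) (Fin (2 * n)) k,
      (∀ i, x i ∈ spSet k n ∧ (x i).rank ≤ 1) ∧ M = ∑ i, x i := by
  obtain ⟨T, hT, hsum⟩ := exists_sum_of_isSymm _ (mem_spSet_iff_isSymm.1 hM)
    ((rank_mul_le_right (Jmat k n) M).trans hr)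
  refine ⟨fun i => -Jmat k n * T i, fun i => ⟨?_, ?_⟩, ?_⟩
  · rw [mem_spSet_iff_isSymm, ← mul_assoc, mul_neg, Jmat_mul_Jmat, neg_neg, one_mul]
    exact (hT i).1
  · exact (rank_mul_le_right _ _).trans (hT i).2
  · rw [← Finset.mul_sum, ← hsum, ← mul_assoc, neg_mul, Jmat_mul_Jmat, neg_neg, one_mul]

/-- The affine cone over the `r`-th secant variety of the projectivized minimal nilpotent
orbit of `sp_{2n}`: the Zariski closure of the set of sums of `r` symplectic matrices of
rank at most `1` is the set of symplectic matrices of rank at most `r`. -/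
theorem stmt19 {k : Type*} [Field k] [IsAlgClosed k] [CharZero k]
    (n r : ℕ) (hr : 1 ≤ r) :
    zClosure {M : Matrix (Fin (2 * n)) (Fin (2 * n)) k |
        ∃ x : Fin r → Matrix (Fin (2 * n)) (Fin (2 * n)) k,
          (∀ i, x i ∈ spSet k n ∧ (x i).rank ≤ 1) ∧ M = ∑ i, x i}
      = {M | M ∈ spSet k n ∧ M.rank ≤ r} := by
  refine Set.Subset.antisymm (fun M hM => ⟨?_, ?_⟩)
    fun M hM => subset_zClosure_s19 _ (exists_sum_of_mem_spSet hM.1 hM.2)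
  · refine zClosure_subset_spSet ?_ hM
    rintro _ ⟨x, hx, rfl⟩
    exact sum_mem_spSet _ _ fun i _ => (hx i).1
  · refine rank_le_of_mem_zClosure ?_ hM
    rintro _ ⟨x, hx, rfl⟩
    simpa using rank_sum_le_card Finset.univ x fun i _ => (hx i).2
end
end
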